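/- Let f be an orientation-preserving homeomorphism of ℝ² satisfying (P1) and (P2), with Fix(f) not compact, and let I be an adapted isotopy. Then for every finite Borel measure ν on ℝ² invariant under f, every free disc U for f, and every point z' ∈ Fix(f), one has ∫_{∪_{k≥0} f^k(U)} ρ_{z'}(z) dν(z) = ∫_U α_{U,z'}(z) dν(z), where ρ_{z'} is defined ν-almost everywhere on these sets. -/

import Mathlib

open MeasureTheory Filter Topology Set Metric

noncomputable section

attribute [local instance] Classical.propDecidable

/-- An isotopy (within homeomorphisms of `X`) from the identity to `f`,
parametrised by `t ∈ [0,1]` (the values for `t ∉ [0,1]` are irrelevant). -/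
structure HIsotopy {X : Type*} [TopologicalSpace X] (f : X ≃ₜ X) where
  F : ℝ → X ≃ₜ X
  cont : Continuous fun p : ℝ × X => F p.1 p.2
  cont_symm : Continuous fun p : ℝ × X => (F p.1).symm p.2
  zero : F 0 = Homeomorph.refl X
  one : F 1 = f

/-- The set of fixed points of a map. -/
def FixPts {X : Type*} (g : X → X) : Set X := {z | g z = z}

/-- The set of positively recurrent points of `f`. -/
def RecPlus (f : ℂ ≃ₜ ℂ) : Set ℂ :=
  {z | ∃ n : ℕ → ℕ, StrictMono n ∧ Tendsto (fun k => (⇑f)^[n k] z) atTop (𝓝 z)}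

/-- The total angular variation (number of turns around the origin, i.e. the
integral of the polar-angle form `dθ`) of a continuous path `[0,1] → ℂ ∖ {0}`,
defined via a continuous lift of the argument (junk value otherwise). -/
def angVar (γ : ℝ → ℂ) : ℝ :=
  if h : ∃ θ : ℝ → ℝ, ContinuousOn θ (Set.Icc 0 1) ∧
      ∀ t ∈ Set.Icc (0 : ℝ) 1, γ t = (‖γ t‖ : ℂ) * Complex.exp ((θ t : ℂ) * Complex.I)
  then (h.choose 1 - h.choose 0) / (2 * Real.pi)
  else 0

/-- `Enlace_I(z,z')`: the integral of `dθ` along `t ↦ f_t(z) - f_t(z')`. -/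
def Enlace {f : ℂ ≃ₜ ℂ} (I : HIsotopy f) (z z' : ℂ) : ℝ :=
  angVar fun t => I.F t z - I.F t z'

/-- `Tourne_I(z)`: the integral of `dθ` along `t ↦ f_t(z)`. -/
def Tourne {f : ℂ ≃ₜ ℂ} (I : HIsotopy f) (z : ℂ) : ℝ :=
  angVar fun t => I.F t z

/-- Property (P1): `Enlace_I` is bounded on pairs of distinct fixed points. -/
def P1 {f : ℂ ≃ₜ ℂ} (I : HIsotopy f) : Prop :=
  ∃ M : ℝ, ∀ z ∈ FixPts ⇑f, ∀ z' ∈ FixPts ⇑f, z ≠ z' → |Enlace I z z'| ≤ M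

/-- Property (P2): `Tourne_I` is constant on the fixed points in a
neighbourhood of infinity (i.e. outside some compact set). -/
def P2 {f : ℂ ≃ₜ ℂ} (I : HIsotopy f) : Prop :=
  ∃ K : Set ℂ, IsCompact K ∧
    ∀ z ∈ FixPts ⇑f \ K, ∀ z' ∈ FixPts ⇑f \ K, Tourne I z = Tourne I z'

/-- An isotopy is adapted if `Tourne_I` vanishes on the fixed points in a
neighbourhood of infinity. -/
def Adapted {f : ℂ ≃ₜ ℂ} (I : HIsotopy f) : Prop :=
  ∃ K : Set ℂ, IsCompact K ∧ ∀ z ∈ FixPts ⇑f \ K, Tourne I z = 0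

/-- The orbit of `z` has rotation number `ρ` around `z'` (with respect to the
isotopy `I`): along every strictly increasing sequence of integers `(n k)` with
`f^[n k] z → z`, the Birkhoff averages of `Enlace I · z'` converge to `ρ`. -/
def HasRot {f : ℂ ≃ₜ ℂ} (I : HIsotopy f) (z' z : ℂ) (ρ : ℝ) : Prop :=
  ∀ n : ℕ → ℕ, StrictMono n → Tendsto (fun k => (⇑f)^[n k] z) atTop (𝓝 z) →
    Tendsto (fun k => (∑ r ∈ Finset.range (n k), Enlace I ((⇑f)^[r] z) z') / (n k : ℝ))
      atTop (𝓝 ρ)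

/-- The rotation number `ρ_{z'}(z)` as a function (junk value `0` if it is
not defined). -/
def rho {f : ℂ ≃ₜ ℂ} (I : HIsotopy f) (z' z : ℂ) : ℝ :=
  if h : ∃ ρ : ℝ, HasRot I z' z ρ then h.choose else 0

/-- A free disc for `f`: an open set homeomorphic to the plane and disjoint
from its image. -/
def FreeDisc (f : ℂ ≃ₜ ℂ) (U : Set ℂ) : Prop :=
  IsOpen U ∧ Nonempty (U ≃ₜ ℂ) ∧ Disjoint (⇑f '' U) U

/-- The first return time `τ_U(z)` to `U` (junk value `0` if the orbit never
returns). -/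
def retTime (f : ℂ ≃ₜ ℂ) (U : Set ℂ) (z : ℂ) : ℕ :=
  sInf {n : ℕ | 0 < n ∧ (⇑f)^[n] z ∈ U}

/-- `γ` is a path in `U` from `x` to `y` (parametrised by `[0,1]`). -/
def IsPathIn (U : Set ℂ) (x y : ℂ) (γ : ℝ → ℂ) : Prop :=
  ContinuousOn γ (Set.Icc 0 1) ∧ (∀ t ∈ Set.Icc (0 : ℝ) 1, γ t ∈ U) ∧ γ 0 = x ∧ γ 1 = y

/-- `α_{U,z'}(z) = Σ_{0 ≤ ℓ < τ_U(z)} Enlace_I(f^ℓ(z),z') + ∫_{γ_{U,z} - z'} dθ`,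
where `γ_{U,z}` is a path in `U` joining the first return `F_U(z)` to `z`. -/
def alphaU {f : ℂ ≃ₜ ℂ} (I : HIsotopy f) (U : Set ℂ) (z' z : ℂ) : ℝ :=
  (∑ ℓ ∈ Finset.range (retTime f U z), Enlace I ((⇑f)^[ℓ] z) z') +
    if h : ∃ γ : ℝ → ℂ, IsPathIn U ((⇑f)^[retTime f U z] z) z γ
    then angVar fun t => h.choose t - z' else 0

/-- `α̂_{U,R}(z) = sup { |α_{U,z'}(z)| : z' ∈ Fix(f), ‖z'‖ ≥ R }`. -/
def alphaHat {f : ℂ ≃ₜ ℂ} (I : HIsotopy f) (U : Set ℂ) (R : ℝ) (z : ℂ) : ℝ :=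
  sSup {a : ℝ | ∃ z' ∈ FixPts ⇑f, R ≤ ‖z'‖ ∧ a = |alphaU I U z' z|}

/-- The (closed) support of a measure. -/
def measSupport {X : Type*} [TopologicalSpace X] {m : MeasurableSpace X}
    (μ : Measure X) : Set X :=
  {x | ∀ U : Set X, IsOpen U → x ∈ U → μ U ≠ 0}

/-- The standard unit sphere `S² ⊂ ℝ³`. -/
notation "𝕊²" => Metric.sphere (0 : EuclideanSpace ℝ (Fin 3)) 1

instance : Fact (Module.finrank ℝ (EuclideanSpace ℝ (Fin 3)) = 3) :=
  ⟨finrank_euclideanSpace_fin⟩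

open Manifold in
/-- `g` is a `C¹` diffeomorphism of the standard sphere. -/
def IsC1SphereDiffeo (g : 𝕊² → 𝕊²) : Prop :=
  Function.Bijective g ∧ ContMDiff (𝓡 2) (𝓡 2) 1 g ∧
    ∃ g' : 𝕊² → 𝕊², Function.LeftInverse g' g ∧ Function.RightInverse g' g ∧
      ContMDiff (𝓡 2) (𝓡 2) 1 g'

/-- `f` extends to a `C¹` diffeomorphism of `S² = ℝ² ⊔ {∞}` for some smooth
structure on `S²`: transporting the extension of `f` to the one-point
compactification through some homeomorphism with the standard sphere yields a
`C¹` diffeomorphism. -/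
def ExtendsToC1SphereDiffeo (f : ℂ ≃ₜ ℂ) : Prop :=
  ∃ φ : OnePoint ℂ ≃ₜ 𝕊², IsC1SphereDiffeo fun x => φ (OnePoint.map (⇑f) (φ.symm x))

/-- The commutator loop `t ↦ [f₁^t, f₂^t] = f₁^t ∘ f₂^t ∘ (f₁^t)⁻¹ ∘ (f₂^t)⁻¹`. -/
def commLoop {X : Type*} [TopologicalSpace X] {f₁ f₂ : X ≃ₜ X}
    (I₁ : HIsotopy f₁) (I₂ : HIsotopy f₂) (t : ℝ) : X ≃ₜ X :=
  (I₂.F t).symm.trans ((I₁.F t).symm.trans ((I₂.F t).trans (I₁.F t)))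

/-- The invariant `W(f₁,f₂)` vanishes: for isotopies from the identity to
`f₁`, `f₂`, the commutator loop is null-homotopic (rel basepoint) in the group
of homeomorphisms. -/
def WVanishes {X : Type*} [TopologicalSpace X] (f₁ f₂ : X ≃ₜ X) : Prop :=
  ∃ (I₁ : HIsotopy f₁) (I₂ : HIsotopy f₂) (H : ℝ → ℝ → X ≃ₜ X),
    Continuous (fun p : (ℝ × ℝ) × X => H p.1.1 p.1.2 p.2) ∧
    Continuous (fun p : (ℝ × ℝ) × X => (H p.1.1 p.1.2).symm p.2) ∧
    (∀ t, H 0 t = commLoop I₁ I₂ t) ∧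
    (∀ t, H 1 t = Homeomorph.refl X) ∧
    (∀ s, H s 0 = Homeomorph.refl X) ∧
    (∀ s, H s 1 = Homeomorph.refl X)

/-- The shorter great-circle arc joining `p` to `z` on the unit sphere
(for `z` neither `p` nor its antipode): the points of the sphere which are
nonnegative linear combinations of `p` and `z`. -/
def minorArcS (p z : 𝕊²) : Set 𝕊² :=
  {x | ∃ a b : ℝ, 0 ≤ a ∧ 0 ≤ b ∧
    (x : EuclideanSpace ℝ (Fin 3)) =
      a • (p : EuclideanSpace ℝ (Fin 3)) + b • (z : EuclideanSpace ℝ (Fin 3))}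

/-- The longer great-circle arc joining `p` to `z` on the unit sphere. -/
def majorArcS (p z : 𝕊²) : Set 𝕊² :=
  {x | ∃ a b : ℝ, (a ≤ 0 ∨ b ≤ 0) ∧
    (x : EuclideanSpace ℝ (Fin 3)) =
      a • (p : EuclideanSpace ℝ (Fin 3)) + b • (z : EuclideanSpace ℝ (Fin 3))}

/-!
Seen relative to the moving point `z'`, the isotopy lifts through `w ↦ z' + exp w` and ends at a
homeomorphism `g` of the plane which lifts `f` and commutes with the translation by `2πi`. If an
integer `p` is not the linking number with `z'` of a fixed point, then `g - 2πip` has no fixed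
point, and by Brouwer's lemma, in the form of Franks, it has no closed chain of free discs. Two
first returns to `U` whose average turning numbers `α / τ` lie on both sides of `p` would produce
such a chain among the preimages of `U`, so that `|α| ≤ C τ` on `U`; by Kac's inequality `α` is
then integrable.

Along the return times of an orbit to `U`, the Birkhoff sums of `Enlace` differ from those of
`1_U α` by a boundary term which, once divided by the time, tends to zero. Hence `ρ` agrees almost
everywhere on the saturation of `U` with the conditional expectation of `1_U α` on the invariant
sets. The saturation is invariant up to a null set, so both functions have the same integral over
it.
-/

/-! ### Continuous logarithms and angular variation -/

theorem exists_continuous_log_apply_eq {A : Type*} [TopologicalSpace A] [SimplyConnectedSpace A]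
    [LocallyPathConnectedSpace A] {g : A → ℂ} (hg : Continuous g) (hg₀ : ∀ a, g a ≠ 0)
    {a₀ : A} {w₀ : ℂ} (hw₀ : Complex.exp w₀ = g a₀) :
    ∃ L : A → ℂ, Continuous L ∧ L a₀ = w₀ ∧ ∀ a, Complex.exp (L a) = g a := by
  obtain ⟨L, ⟨hL₀, hL⟩, -⟩ := Complex.isCoveringMap_exp.existsUnique_continuousMap_lifts
    (A := A) ⟨fun a => (⟨g a, hg₀ a⟩ : {z : ℂ // z ≠ 0}), by fun_prop⟩ a₀ w₀ (Subtype.ext hw₀)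
  exact ⟨L, L.continuous, hL₀, fun a => congrArg Subtype.val (congrFun hL a)⟩

theorem exists_continuous_log {A : Type*} [TopologicalSpace A] [SimplyConnectedSpace A]
    [LocallyPathConnectedSpace A] {g : A → ℂ} (hg : Continuous g) (hg₀ : ∀ a, g a ≠ 0) :
    ∃ L : A → ℂ, Continuous L ∧ ∀ a, Complex.exp (L a) = g a := by
  obtain ⟨a₀⟩ : Nonempty A := inferInstance
  obtain ⟨L, hL, -, hexp⟩ := exists_continuous_log_apply_eq hg hg₀ (Complex.exp_log (hg₀ a₀))
  exact ⟨L, hL, hexp⟩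

theorem sub_eq_sub_of_exp_eq {A : Type*} [TopologicalSpace A] {S : Set A} (hS : IsPreconnected S)
    {K L : A → ℂ} (hK : ContinuousOn K S) (hL : ContinuousOn L S)
    (h : ∀ x ∈ S, Complex.exp (K x) = Complex.exp (L x)) {x y : A} (hx : x ∈ S) (hy : y ∈ S) :
    K x - L x = K y - L y := by
  have hlift : S.EqOn K (fun z => L z + (K x - L x)) := by
    refine Complex.isCoveringMap_exp.eqOn_of_comp_eqOn hS hK (hL.add continuousOn_const)
      (fun z hz => Subtype.ext ?_) hx (by ring)
    simp only [Function.comp_apply, Complex.exp_add, Complex.exp_sub, h x hx, h z hz]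
    rw [div_self (Complex.exp_ne_zero _), mul_one]
  rw [hlift hy]
  ring

theorem eq_of_exp_eq {A : Type*} [TopologicalSpace A] [PreconnectedSpace A] {K L : A → ℂ}
    (hK : Continuous K) (hL : Continuous L) (h : ∀ x, Complex.exp (K x) = Complex.exp (L x))
    {a : A} (ha : K a = L a) (x : A) : K x = L x := by
  have hdiff := sub_eq_sub_of_exp_eq isPreconnected_univ hK.continuousOn hL.continuousOn
    (fun y _ => h y) (mem_univ x) (mem_univ a)
  rwa [ha, sub_self, sub_eq_zero] at hdiff

theorem angVar_eq_of_exp_eq {γ L : ℝ → ℂ} (hL : ContinuousOn L (Icc 0 1))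
    (h : ∀ t ∈ Icc (0 : ℝ) 1, Complex.exp (L t) = γ t) :
    angVar γ = (L 1 - L 0).im / (2 * Real.pi) := by
  have hpolar : ∃ θ : ℝ → ℝ, ContinuousOn θ (Icc 0 1) ∧
      ∀ t ∈ Icc (0 : ℝ) 1, γ t = (‖γ t‖ : ℂ) * Complex.exp ((θ t : ℂ) * Complex.I) := by
    refine ⟨fun t => (L t).im, Complex.continuous_im.comp_continuousOn hL, fun t ht => ?_⟩
    rw [← h t ht, Complex.norm_exp, Complex.ofReal_exp, ← Complex.exp_add, Complex.re_add_im]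
  rw [angVar, dif_pos hpolar]
  obtain ⟨hθ, hγθ⟩ := hpolar.choose_spec
  set θ := hpolar.choose
  have hlift : ∀ t ∈ Icc (0 : ℝ) 1,
      Complex.exp (((L t).re : ℂ) + (θ t : ℂ) * Complex.I) = Complex.exp (L t) := by
    intro t ht
    rw [h t ht, Complex.exp_add, ← Complex.ofReal_exp, ← Complex.norm_exp, h t ht, ← hγθ t ht]
  have hdiff := sub_eq_sub_of_exp_eq isPreconnected_Icc (by fun_prop) hL hlift
    (right_mem_Icc.2 zero_le_one) (left_mem_Icc.2 zero_le_one)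
  have him : θ 1 - (L 1).im = θ 0 - (L 0).im := by simpa using congrArg Complex.im hdiff
  rw [Complex.sub_im]
  congr 1
  linarith

/-! ### Isotopies to the identity -/

/-- A homeomorphism `h` is isotopic to the identity if it is the end of a continuous path of
injective maps starting at the identity. The intermediate maps need not be surjective. -/
def IsotopicToId {X : Type*} [TopologicalSpace X] (h : X ≃ₜ X) : Prop :=
  ∃ F : ℝ → X → X, Continuous (fun p : ℝ × X => F p.1 p.2) ∧
    (∀ t, Function.Injective (F t)) ∧ (∀ x, F 0 x = x) ∧ ∀ x, F 1 x = h x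

theorem IsotopicToId.refl (X : Type*) [TopologicalSpace X] : IsotopicToId (Homeomorph.refl X) :=
  ⟨fun _ x => x, continuous_snd, fun _ => Function.injective_id, fun _ => rfl, fun _ => rfl⟩

theorem IsotopicToId.trans {X : Type*} [TopologicalSpace X] {g h : X ≃ₜ X}
    (hg : IsotopicToId g) (hh : IsotopicToId h) : IsotopicToId (g.trans h) := by
  obtain ⟨G, hG, hGinj, hG₀, hG₁⟩ := hg
  obtain ⟨H, hH, hHinj, hH₀, hH₁⟩ := hh
  exact ⟨fun t x => H t (G t x), hH.comp (continuous_fst.prodMk hG),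
    fun t => (hHinj t).comp (hGinj t), by simp [hG₀, hH₀], by simp [hG₁, hH₁]⟩

theorem IsotopicToId.symm {X : Type*} [TopologicalSpace X] {h : X ≃ₜ X}
    (hh : IsotopicToId h) : IsotopicToId h.symm := by
  obtain ⟨H, hH, hHinj, hH₀, hH₁⟩ := hh
  exact ⟨fun t x => H (1 - t) (h.symm x),
    hH.comp ((continuous_const.sub continuous_fst).prodMk (h.symm.continuous.comp continuous_snd)),
    fun t => (hHinj _).comp h.symm.injective,
    by simp [hH₁], by simp [hH₀]⟩

theorem HIsotopy.isotopicToId {X : Type*} [TopologicalSpace X] {f : X ≃ₜ X} (I : HIsotopy f) :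
    IsotopicToId f :=
  ⟨fun t => I.F t, I.cont, fun t => (I.F t).injective, by simp [I.zero], by simp [I.one]⟩

/- Let `Λ (t, x)` be a logarithm of `F t (h x) - F t x`. Comparing `Λ (1, x)` with `Λ (0, h x)`, and
`Λ (t, h a)` with `Λ (t, a)`, shows that `Λ (0, ·)` takes the same value at both points of a
`2`-cycle `{a, h a}`, whereas `h x - x` takes opposite values there. -/
theorem IsotopicToId.apply_apply_ne {h : ℂ ≃ₜ ℂ} (hI : IsotopicToId h) (hfix : ∀ z, h z ≠ z)
    (a : ℂ) : h (h a) ≠ a := by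
  intro hper
  obtain ⟨F, hF, hinj, hF₀, hF₁⟩ := hI
  obtain ⟨Λ, hΛ, hexp⟩ := exists_continuous_log (A := ℝ × ℂ)
    (g := fun p => F p.1 (h p.2) - F p.1 p.2)
    ((hF.comp (continuous_fst.prodMk (h.continuous.comp continuous_snd))).sub hF)
    (fun p => sub_ne_zero.2 ((hinj p.1).ne (hfix p.2)))
  have hspace : Λ (1, a) - Λ (0, h a) = Λ (1, h a) - Λ (0, a) := by
    have hdiff := sub_eq_sub_of_exp_eq (K := fun x => Λ (1, x)) (L := fun x => Λ (0, h x))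
      isPreconnected_univ (Continuous.continuousOn (by fun_prop))
      (Continuous.continuousOn (by fun_prop)) (fun x _ => by simp [hexp, hF₀, hF₁])
      (mem_univ a) (mem_univ (h a))
    rwa [hper] at hdiff
  have htime : Λ (1, h a) - (Λ (1, a) + Real.pi * Complex.I) =
      Λ (0, h a) - (Λ (0, a) + Real.pi * Complex.I) := by
    refine sub_eq_sub_of_exp_eq (K := fun t => Λ (t, h a))
      (L := fun t => Λ (t, a) + Real.pi * Complex.I)
      isPreconnected_univ (Continuous.continuousOn (by fun_prop))
      (Continuous.continuousOn (by fun_prop)) (fun t _ => ?_) (mem_univ 1) (mem_univ 0)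
    rw [Complex.exp_add, Complex.exp_pi_mul_I, hexp, hexp, hper]
    ring
  have hlog : Λ (0, a) = Λ (0, h a) := by linear_combination (hspace + htime) / 2
  have hsub : h a - a = a - h a := by
    simpa [hexp, hF₀, hper] using congrArg Complex.exp hlog
  exact hfix a (by linear_combination hsub / 2)

/-! ### Perturbations supported in free sets -/

section Push

variable {E : Type*} [NormedAddCommGroup E] [NormedSpace ℝ E] [CompleteSpace E]

theorem exists_isotopicToId_apply_eq_add {K : NNReal} (hK : K < 1) {g : E → E}
    (hg : LipschitzWith K g) : ∃ φ : E ≃ₜ E, IsotopicToId φ ∧ ∀ x, φ x = x + g x := by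
  have happrox : ApproximatesLinearOn (fun x => x + g x)
      (ContinuousLinearEquiv.refl ℝ E : E →L[ℝ] E) univ K :=
    ApproximatesLinearOn.approximatesLinearOn_iff_lipschitzOnWith.2 <| by
      simpa [Pi.sub_def] using lipschitzOnWith_univ.2 hg
  have hnorm : Subsingleton E ∨
      K < ‖((ContinuousLinearEquiv.refl ℝ E).symm : E →L[ℝ] E)‖₊⁻¹ := by
    rcases subsingleton_or_nontrivial E with hE | hE
    · exact .inl hE
    · have hone : ‖((ContinuousLinearEquiv.refl ℝ E).symm : E →L[ℝ] E)‖₊ = 1 :=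
        NNReal.eq ContinuousLinearMap.norm_id
      exact .inr (by rwa [hone, inv_one])
  refine ⟨happrox.toHomeomorph _ hnorm, ⟨fun t x => x + (projIcc 0 1 zero_le_one t : ℝ) • g x,
    ?_, fun t => ?_, by simp, fun x => by simp; rfl⟩, fun _ => rfl⟩
  · have := hg.continuous
    have : Continuous fun p : ℝ × E => (projIcc (0 : ℝ) 1 zero_le_one p.1 : ℝ) :=
      continuous_subtype_val.comp (continuous_projIcc.comp continuous_fst)
    fun_prop
  · let s : Icc (0 : ℝ) 1 := projIcc 0 1 zero_le_one t
    have hs : ‖(s : ℝ)‖₊ ≤ 1 := by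
      rw [← NNReal.coe_le_coe, coe_nnnorm, Real.norm_of_nonneg s.2.1]
      exact s.2.2
    have hsg : LipschitzWith (‖(s : ℝ)‖₊ * K) ((s : ℝ) • g) := (lipschitzWith_smul (s : ℝ)).comp hg
    exact (AntilipschitzWith.id.add_lipschitzWith (hsg.weaken (mul_le_of_le_one_left' hs))
      (by simpa using hK)).injective

theorem exists_isotopicToId_push_ball {c q : E} {r : ℝ} (hq : q ∈ ball c r) :
    ∃ φ : E ≃ₜ E, IsotopicToId φ ∧ (∀ x ∉ ball c r, φ x = x) ∧ φ c = q := by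
  have hr : 0 < r := pos_of_mem_ball hq
  have htent : LipschitzWith 1 fun x : E => max 0 (r - dist x c) := by
    simpa using ((LipschitzWith.const r).sub (LipschitzWith.dist_left c)).const_max 0
  have hK : ‖r⁻¹ • (q - c)‖₊ < 1 := by
    rw [← NNReal.coe_lt_coe, coe_nnnorm, norm_smul, norm_inv, Real.norm_of_nonneg hr.le,
      ← dist_eq_norm, NNReal.coe_one, inv_mul_lt_one₀ hr]
    exact hq
  obtain ⟨φ, hφ, hφ_apply⟩ := exists_isotopicToId_apply_eq_add hK
    (g := fun x => max 0 (r - dist x c) • r⁻¹ • (q - c)) <|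
      LipschitzWith.of_dist_le_mul fun x y => by
        rw [dist_eq_norm, ← sub_smul, norm_smul, mul_comm, coe_nnnorm, ← dist_eq_norm]
        gcongr
        simpa using htent.dist_le_mul x y
  refine ⟨φ, hφ, fun x hx => ?_, ?_⟩
  · rw [hφ_apply, max_eq_left (by simpa using hx), zero_smul, add_zero]
  · rw [hφ_apply, dist_self, sub_zero, max_eq_right hr.le, smul_inv_smul₀ hr.ne',
      add_sub_cancel]

theorem exists_isotopicToId_push {V : Set E} (hV : IsOpen V)
    (hconn : IsPreconnected V) {p q : E} (hp : p ∈ V) (hq : q ∈ V) :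
    ∃ φ : E ≃ₜ E, IsotopicToId φ ∧ (∀ x ∉ V, φ x = x) ∧ φ p = q := by
  refine hconn.induction₂
    (fun p q => ∃ φ : E ≃ₜ E, IsotopicToId φ ∧ (∀ x ∉ V, φ x = x) ∧ φ p = q) ?_ ?_ ?_ hp hq
  · intro x hx
    obtain ⟨r, hr, hball⟩ := Metric.isOpen_iff.1 hV x hx
    filter_upwards [mem_nhdsWithin_of_mem_nhds (ball_mem_nhds x hr)] with y hy
    obtain ⟨φ, hφ, hoff, hxy⟩ := exists_isotopicToId_push_ball hy
    exact ⟨φ, hφ, fun z hz => hoff z fun h => hz (hball h), hxy⟩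
  · rintro x y z - - - ⟨φ, hφ, hφoff, hxy⟩ ⟨ψ, hψ, hψoff, hyz⟩
    exact ⟨φ.trans ψ, hφ.trans hψ, fun w hw => by simp [hφoff w hw, hψoff w hw], by simp [hxy, hyz]⟩
  · rintro x y - - ⟨φ, hφ, hoff, hxy⟩
    exact ⟨φ.symm, hφ.symm, fun w hw => by rw [φ.symm_apply_eq, hoff w hw],
      by rw [φ.symm_apply_eq, hxy]⟩

end Push

section FreeFamily

variable {E ι : Type*} [NormedAddCommGroup E] [NormedSpace ℝ E] [CompleteSpace E]
  {h : E ≃ₜ E} {s : Finset ι} {V : ι → Set E} {p q : ι → E}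

theorem mapsTo_of_eq_self_off {X : Type*} {φ : X → X} (hφ : Function.Injective φ) {V : Set X}
    (hoff : ∀ x ∉ V, φ x = x) : MapsTo φ V V := by
  intro x hx
  by_contra hφx
  exact hφx ((hφ (hoff _ hφx)).symm ▸ hx)

theorem exists_isotopicToId_push_finset (hV : ∀ i ∈ s, IsOpen (V i))
    (hconn : ∀ i ∈ s, IsPreconnected (V i)) (hdisj : (s : Set ι).PairwiseDisjoint V)
    (hp : ∀ i ∈ s, p i ∈ V i) (hq : ∀ i ∈ s, q i ∈ V i) :
    ∃ φ : E ≃ₜ E, IsotopicToId φ ∧ (∀ x, (∀ i ∈ s, x ∉ V i) → φ x = x) ∧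
      (∀ i ∈ s, MapsTo φ (V i) (V i)) ∧ ∀ i ∈ s, φ (p i) = q i := by
  induction s using Finset.induction_on with
  | empty => exact ⟨Homeomorph.refl E, IsotopicToId.refl E, by simp, by simp, by simp⟩
  | insert a s has ih =>
    simp only [Finset.forall_mem_insert] at hV hconn hp hq
    rw [Finset.coe_insert, pairwiseDisjoint_insert_of_notMem (by simpa using has)] at hdisj
    obtain ⟨φ, hφ, hφoff, hφV, hφp⟩ := ih hV.2 hconn.2 hdisj.1 hp.2 hq.2
    obtain ⟨ψ, hψ, hψoff, hψp⟩ := exists_isotopicToId_push hV.1 hconn.1 hp.1 hq.1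
    have hφ_eq : ∀ x ∈ V a, φ x = x := fun x hx =>
      hφoff x fun j hj => disjoint_left.1 (hdisj.2 j hj) hx
    have hψ_eq : ∀ i ∈ s, ∀ x ∈ V i, ψ x = x := fun i hi x hx =>
      hψoff x (disjoint_right.1 (hdisj.2 i hi) hx)
    refine ⟨φ.trans ψ, hφ.trans hψ, fun x hx => ?_, ?_, ?_⟩
    · simp only [Finset.forall_mem_insert] at hx
      simp [hφoff x hx.2, hψoff x hx.1]
    · refine (Finset.forall_mem_insert ..).2 ⟨fun x hx => ?_, fun i hi x hx => ?_⟩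
      · simpa [hφ_eq x hx] using mapsTo_of_eq_self_off ψ.injective hψoff hx
      · simpa [hψ_eq i hi _ (hφV i hi hx)] using hφV i hi hx
    · refine (Finset.forall_mem_insert ..).2 ⟨?_, fun i hi => ?_⟩
      · simpa [hφ_eq _ hp.1] using hψp
      · simpa [hφp i hi] using hψ_eq i hi _ (hq.2 i hi)

/-- A connected open set disjoint from its image under `h`. -/
structure FreeRegion {X : Type*} [TopologicalSpace X] (h : X ≃ₜ X) (V : Set X) : Prop where
  isOpen : IsOpen V
  isPreconnected : IsPreconnected V
  mapsTo_compl : MapsTo h V Vᶜ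

/-- A finite family of pairwise disjoint free regions. -/
structure FreeFamily {X : Type*} [TopologicalSpace X] (h : X ≃ₜ X) (s : Finset ι) (V : ι → Set X) :
    Prop where
  freeRegion : ∀ i ∈ s, FreeRegion h (V i)
  pairwiseDisjoint : (s : Set ι).PairwiseDisjoint V

theorem FreeFamily.exists_push (hV : FreeFamily h s V) (hfix : ∀ x, h x ≠ x)
    (hp : ∀ i ∈ s, p i ∈ V i) (hq : ∀ i ∈ s, q i ∈ V i) :
    ∃ φ : E ≃ₜ E, IsotopicToId φ ∧ (∀ x, (∀ i ∈ s, x ∉ V i) → φ x = x) ∧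
      (∀ i ∈ s, φ (p i) = q i) ∧ ∀ x, h.trans φ x ≠ x := by
  obtain ⟨φ, hφ, hoff, hφV, hφp⟩ := exists_isotopicToId_push_finset
    (fun i hi => (hV.freeRegion i hi).isOpen) (fun i hi => (hV.freeRegion i hi).isPreconnected)
    hV.pairwiseDisjoint hp hq
  refine ⟨φ, hφ, hoff, hφp, fun x hx => ?_⟩
  rw [Homeomorph.trans_apply] at hx
  by_cases hmem : ∀ i ∈ s, h x ∉ V i
  · exact hfix x (by rwa [hoff _ hmem] at hx)
  · push Not at hmem
    obtain ⟨i, hi, hxi⟩ := hmem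
    exact (hV.freeRegion i hi).mapsTo_compl (hx ▸ hφV i hi hxi) hxi

/-- A closed chain of a free family: the `h`-orbit of the departure point `d i ∈ V i` avoids the
whole family until it reaches, at time `τ i`, the arrival point `e (σ i) ∈ V (σ i)`. -/
structure FreeChain {X : Type*} [TopologicalSpace X] (h : X ≃ₜ X) (s : Finset ι) (V : ι → Set X)
    (d e : ι → X) (σ : ι → ι) (τ : ι → ℕ) : Prop extends FreeFamily h s V where
  departure_mem : ∀ i ∈ s, d i ∈ V i
  arrival_mem : ∀ i ∈ s, e i ∈ V i
  mapsTo : MapsTo σ s s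
  time_pos : ∀ i ∈ s, 0 < τ i
  iterate_time : ∀ i ∈ s, h^[τ i] (d i) = e (σ i)
  iterate_notMem : ∀ i ∈ s, ∀ k, 0 < k → k < τ i → ∀ j ∈ s, h^[k] (d i) ∉ V j

variable {d e : ι → E} {σ : ι → ι} {τ : ι → ℕ}

theorem iterate_comp_apply_of_forall_lt {X : Type*} {h φ : X → X} {x : X} {n : ℕ}
    (hφ : ∀ k, 0 < k → k < n → φ (h^[k] x) = h^[k] x) (hn : 0 < n) :
    (φ ∘ h)^[n] x = φ (h^[n] x) := by
  induction n, hn using Nat.le_induction with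
  | base => rfl
  | succ n hn ih =>
    rw [Function.iterate_succ_apply', ih fun k hk hkn => hφ k hk (hkn.trans n.lt_succ_self),
      hφ n hn n.lt_succ_self, Function.comp_apply, ← Function.iterate_succ_apply' h]

/- Pushing each arrival point to the departure point of the same set closes the chain up. -/
theorem FreeChain.exists_iterate_eq (hc : FreeChain h s V d e σ τ) (hI : IsotopicToId h)
    (hfix : ∀ x, h x ≠ x) :
    ∃ h' : E ≃ₜ E, IsotopicToId h' ∧ (∀ x, h' x ≠ x) ∧
      ∀ m, ∀ i ∈ s, h'^[∑ k ∈ Finset.range m, τ (σ^[k] i)] (d i) = d (σ^[m] i) := by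
  obtain ⟨φ, hφ, hoff, hed, hfix'⟩ :=
    hc.exists_push hfix hc.arrival_mem hc.departure_mem
  refine ⟨h.trans φ, hI.trans hφ, hfix', fun m i hi => ?_⟩
  have hjump : ∀ j ∈ s, (h.trans φ)^[τ j] (d j) = d (σ j) := fun j hj =>
    calc (φ ∘ h)^[τ j] (d j) = φ (h^[τ j] (d j)) := iterate_comp_apply_of_forall_lt
          (fun k hk hkτ => hoff _ (hc.iterate_notMem j hj k hk hkτ)) (hc.time_pos j hj)
      _ = d (σ j) := by rw [hc.iterate_time j hj, hed _ (hc.mapsTo hj)]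
  induction m with
  | zero => rfl
  | succ m ih =>
    rw [Finset.sum_range_succ, add_comm, Function.iterate_add_apply, ih,
      hjump _ (hc.mapsTo.iterate m hi), Function.iterate_succ_apply']

end FreeFamily

/-! ### Brouwer's lemma on translation arcs -/

section Brouwer

/-- For homeomorphisms isotopic to the identity, a point of period `n` forces a fixed point. -/
def PeriodForcesFixedPoint (X : Type*) [TopologicalSpace X] (n : ℕ) : Prop :=
  ∀ h : X ≃ₜ X, IsotopicToId h → (∀ x, h x ≠ x) → ∀ x, h^[n] x ≠ x

theorem mapsTo_symm_compl {X : Type*} [TopologicalSpace X] {h : X ≃ₜ X} {V : Set X}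
    (hV : MapsTo h V Vᶜ) : MapsTo h.symm V Vᶜ := fun x hx hx' =>
  hV hx' (by rwa [h.apply_symm_apply])

theorem isOpenMap_iterate {X : Type*} [TopologicalSpace X] (h : X ≃ₜ X) (n : ℕ) :
    IsOpenMap h^[n] := by
  induction n with
  | zero => exact IsOpenMap.id
  | succ n ih => exact ih.comp h.isOpenMap

theorem FreeRegion.image_iterate {X : Type*} [TopologicalSpace X] {h : X ≃ₜ X} {V : Set X}
    (hV : FreeRegion h V) (n : ℕ) : FreeRegion h (h^[n] '' V) where
  isOpen := isOpenMap_iterate h n V hV.isOpen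
  isPreconnected := hV.isPreconnected.image _ (h.continuous.iterate n).continuousOn
  mapsTo_compl := by
    rintro _ ⟨x, hx, rfl⟩ ⟨y, hy, hyx⟩
    rw [← Function.iterate_succ_apply' h, Function.iterate_succ_apply] at hyx
    exact hV.mapsTo_compl hx (h.injective.iterate n hyx ▸ hy)

variable {E : Type*} [NormedAddCommGroup E] [NormedSpace ℝ E]

theorem exists_freeRegion_of_isCompact_of_convex {h : E ≃ₜ E} {C O : Set E} (hC : IsCompact C)
    (hconv : Convex ℝ C) (hfree : MapsTo h C Cᶜ) (hO : IsOpen O) (hCO : C ⊆ O) :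
    ∃ V, FreeRegion h V ∧ C ⊆ V ∧ V ⊆ O := by
  obtain ⟨A, B, hA, hB, hCA, hCB, hAB⟩ := SeparatedNhds.of_isCompact_isCompact
    (hC.image h.continuous) hC
    (disjoint_left.2 fun _ ⟨_, hx, hxy⟩ => hxy ▸ hfree hx)
  obtain ⟨δ, hδ, hthick⟩ := hC.exists_thickening_subset_open
    ((hO.inter hB).inter (hA.preimage h.continuous))
    fun x hx => ⟨⟨hCO hx, hCB hx⟩, hCA (mem_image_of_mem _ hx)⟩
  exact ⟨thickening δ C, ⟨isOpen_thickening, (hconv.thickening δ).isPreconnected,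
    fun x hx hx' => disjoint_left.1 hAB (hthick hx).2 (hthick hx').1.2⟩,
    self_subset_thickening hδ C, fun x hx => (hthick hx).1.1⟩

variable {h : E ≃ₜ E}

/-- The affine arc `γ` is free for `h` on `[0, s)`, until `h` maps its point at time `u` to its
point at time `s`. -/
structure TranslationSegment (h : E ≃ₜ E) (γ : ℝ →ᵃ[ℝ] E) (u s : ℝ) : Prop where
  nonneg : 0 ≤ u
  lt : u < s
  map_eq : h (γ u) = γ s
  mapsTo_compl : MapsTo h (γ '' Ico 0 s) (γ '' Ico 0 s)ᶜ

theorem exists_translationSegment {γ : ℝ →ᵃ[ℝ] E} (hfix : ∀ x, h x ≠ x) (hγ : h (γ 0) = γ 1) :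
    ∃ u s, TranslationSegment h γ u s ∨ TranslationSegment h.symm γ u s := by
  have hγc : Continuous γ := γ.continuous_of_finiteDimensional
  have hcompact : IsCompact ((Icc 0 1 ×ˢ Icc 0 1) ∩ {p : ℝ × ℝ | h (γ p.1) = γ p.2}) :=
    (isCompact_Icc.prod isCompact_Icc).inter_right (isClosed_eq (by fun_prop) (by fun_prop))
  obtain ⟨⟨a, b⟩, ⟨⟨⟨ha₀, ha₁⟩, hb₀, hb₁⟩, hab⟩, hleast⟩ := hcompact.exists_isMinOn
    ⟨(0, 1), by simp [hγ]⟩ (f := fun p => max p.1 p.2) (by fun_prop)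
  have hfree : MapsTo h (γ '' Ico 0 (max a b)) (γ '' Ico 0 (max a b))ᶜ := by
    rintro _ ⟨a', ⟨ha'₀, ha'⟩, rfl⟩ ⟨b', ⟨hb'₀, hb'⟩, hab'⟩
    have hle : max a b ≤ 1 := max_le ha₁ hb₁
    exact (max_lt ha' hb').not_ge <| isMinOn_iff.1 hleast (a', b')
      ⟨⟨⟨ha'₀, (ha'.trans_le hle).le⟩, ⟨hb'₀, (hb'.trans_le hle).le⟩⟩, hab'.symm⟩
  rcases lt_trichotomy a b with hlt | rfl | hlt
  · exact ⟨a, b, .inl ⟨ha₀, hlt, hab, max_eq_right hlt.le ▸ hfree⟩⟩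
  · exact absurd hab (hfix _)
  · exact ⟨b, a, .inr ⟨hb₀, hlt, h.symm_apply_eq.2 hab.symm,
      mapsTo_symm_compl (max_eq_left hlt.le ▸ hfree)⟩⟩

theorem TranslationSegment.exists_freeRegion {γ : ℝ →ᵃ[ℝ] E} {u s : ℝ}
    (hγ : TranslationSegment h γ u s) {r : ℝ} (hr : r < s) {O : Set E} (hO : IsOpen O)
    (hγO : γ '' Icc 0 r ⊆ O) :
    ∃ V, FreeRegion h V ∧ γ '' Icc 0 r ⊆ V ∧ V ⊆ O := by
  have hsub : γ '' Icc 0 r ⊆ γ '' Ico 0 s := image_mono (Icc_subset_Ico_right hr)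
  exact exists_freeRegion_of_isCompact_of_convex
    (isCompact_Icc.image γ.continuous_of_finiteDimensional) ((convex_Icc 0 r).affine_image γ)
    (hγ.mapsTo_compl.mono hsub (compl_subset_compl.2 hsub)) hO hγO

variable [CompleteSpace E] {n : ℕ}

theorem FreeRegion.iterate_notMem {V : Set E} (hV : FreeRegion h V) (hI : IsotopicToId h)
    (hfix : ∀ x, h x ≠ x) {x : E} (hx : x ∈ V)
    (hmin : ∀ m, 0 < m → m < n → PeriodForcesFixedPoint E m) {j : ℕ} (hj : 0 < j) (hjn : j < n) :
    h^[j] x ∉ V := by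
  induction j using Nat.strong_induction_on with
  | _ j ih =>
    intro hmem
    have hchain : FreeChain h {()} (fun _ => V) (fun _ => x) (fun _ => h^[j] x) id fun _ => j :=
      { freeRegion := fun _ _ => hV
        pairwiseDisjoint := by simp
        departure_mem := fun _ _ => hx
        arrival_mem := fun _ _ => hmem
        mapsTo := mapsTo_id _
        time_pos := fun _ _ => hj
        iterate_time := fun _ _ => rfl
        iterate_notMem := fun _ _ k hk hkj _ _ => ih k hkj hk (hkj.trans hjn) }
    obtain ⟨h', hI', hfix', hper⟩ := hchain.exists_iterate_eq hI hfix
    exact hmin j hj hjn h' hI' hfix' x (by simpa using hper 1 () (Finset.mem_singleton_self _))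

/- The chain `x ↦ h x ∈ W`, `h² z ↦ hⁿ z = z ∈ V` closes up to an orbit of period `n - 1`. -/
theorem iterate_ne_of_disjoint_freeRegion {V W : Set E} (hV : FreeRegion h V)
    (hW : FreeRegion h W) (hVW : Disjoint V W) (hI : IsotopicToId h) (hfix : ∀ x, h x ≠ x)
    (hn : 3 ≤ n) (hmin : ∀ m, 0 < m → m < n → PeriodForcesFixedPoint E m) {z x : E}
    (hzV : z ∈ V) (hzW : h^[2] z ∈ W) (hxV : x ∈ V) (hxW : h x ∈ W) : h^[n] z ≠ z := by
  intro hz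
  have hchain : FreeChain h Finset.univ (fun b => cond b V W) (fun b => cond b x (h^[2] z))
      (fun b => cond b z (h x)) (!·) (fun b => cond b 1 (n - 2)) :=
    { freeRegion := by simp [hV, hW]
      pairwiseDisjoint := (pairwise_disjoint_on_bool.2 hVW).set_pairwise _
      departure_mem := fun b _ => by cases b <;> assumption
      arrival_mem := fun b _ => by cases b <;> assumption
      mapsTo := fun _ _ => by simp
      time_pos := by simp; lia
      iterate_time := by
        have hreturn : h^[n - 2] (h^[2] z) = z := by
          rw [← Function.iterate_add_apply, Nat.sub_add_cancel (by lia), hz]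
        simpa using hreturn
      iterate_notMem := by
        have hzV' (k : ℕ) (hkn : k < n - 2) : h^[k] (h^[2] z) ∉ V := by
          rw [← Function.iterate_add_apply]
          exact hV.iterate_notMem hI hfix hzV hmin (by lia) (by lia)
        have hzW' (k : ℕ) (hk : 0 < k) (hkn : k < n - 2) : h^[k] (h^[2] z) ∉ W :=
          hW.iterate_notMem hI hfix hzW hmin hk (by lia)
        simp only [Finset.mem_univ, forall_const, Bool.forall_bool, cond_true, cond_false]
        exact ⟨fun k hk hkn => ⟨hzW' k hk hkn, hzV' k hkn⟩, by lia⟩ }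
  obtain ⟨h', hI', hfix', hper⟩ := hchain.exists_iterate_eq hI hfix
  have hx := hper 2 true (Finset.mem_univ _)
  rw [Finset.sum_range_succ, Finset.sum_range_one] at hx
  exact hmin (1 + (n - 2)) (by lia) (by lia) h' hI' hfix' x hx

namespace TranslationSegment

variable {γ : ℝ →ᵃ[ℝ] E} {u s : ℝ}

theorem disjoint_image_iterate_two (hγ : TranslationSegment h γ u s) (hI : IsotopicToId h)
    (hfix : ∀ x, h x ≠ x) (hn : 3 ≤ n)
    (hmin : ∀ m, 0 < m → m < n → PeriodForcesFixedPoint E m) :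
    Disjoint (h^[2] '' (γ '' Icc 0 u)) (γ '' Icc 0 s) := by
  rw [disjoint_left]
  rintro _ ⟨_, ⟨a, ha, rfl⟩, rfl⟩ ⟨b, hb, hab⟩
  rcases hb.2.lt_or_eq with hbs | rfl
  · obtain ⟨V, hV, hγV, -⟩ := hγ.exists_freeRegion (max_lt hγ.lt hbs) isOpen_univ (subset_univ _)
    have haV : γ a ∈ V := hγV ⟨a, ⟨ha.1, ha.2.trans (le_max_left _ _)⟩, rfl⟩
    exact hV.iterate_notMem hI hfix haV hmin two_pos hn
      (hab ▸ hγV ⟨b, ⟨hb.1, le_max_right _ _⟩, rfl⟩)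
  · rw [← hγ.map_eq] at hab
    exact hγ.mapsTo_compl ⟨a, ⟨ha.1, ha.2.trans_lt hγ.lt⟩, rfl⟩
      (h.injective hab ▸ ⟨u, ⟨hγ.nonneg, hγ.lt⟩, rfl⟩)

theorem iterate_ne (hγ : TranslationSegment h γ u s) (hI : IsotopicToId h)
    (hfix : ∀ x, h x ≠ x) (hn : 3 ≤ n)
    (hmin : ∀ m, 0 < m → m < n → PeriodForcesFixedPoint E m) : h^[n] (γ 0) ≠ γ 0 := by
  have hγc : Continuous γ := γ.continuous_of_finiteDimensional
  obtain ⟨A, B, hA, hB, hγA, hγB, hAB⟩ := SeparatedNhds.of_isCompact_isCompact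
    ((isCompact_Icc.image hγc).image (h.continuous.iterate 2)) (isCompact_Icc.image hγc)
    (hγ.disjoint_image_iterate_two hI hfix hn hmin)
  obtain ⟨W, hW, hγW, hWA⟩ := hγ.exists_freeRegion hγ.lt (hA.preimage (h.continuous.iterate 2))
    (image_subset_iff.1 hγA)
  have hnear : ∀ᶠ t in 𝓝 s, h.symm (γ t) ∈ W :=
    (h.symm.continuous.comp hγc).continuousAt.eventually_mem <| hW.isOpen.mem_nhds <| by
      rw [Function.comp_apply, ← hγ.map_eq, h.symm_apply_apply]
      exact hγW ⟨u, ⟨hγ.nonneg, le_rfl⟩, rfl⟩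
  obtain ⟨t, htW, hut, hts⟩ := ((hnear.filter_mono nhdsWithin_le_nhds).and
    (Ioo_mem_nhdsLT hγ.lt)).exists
  have ht₀ : 0 ≤ t := hγ.nonneg.trans hut.le
  obtain ⟨V, hV, hγV, hVB⟩ := hγ.exists_freeRegion hts hB
    ((image_mono (Icc_subset_Icc_right hts.le)).trans hγB)
  have hdisj : Disjoint V (h^[2] '' W) := (hAB.mono (image_subset_iff.2 hWA) hVB).symm
  refine iterate_ne_of_disjoint_freeRegion hV (hW.image_iterate 2) hdisj hI hfix hn hmin
    (hγV ⟨0, ⟨le_rfl, ht₀⟩, rfl⟩) (mem_image_of_mem _ (hγW ⟨0, ⟨le_rfl, hγ.nonneg⟩, rfl⟩))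
    (hγV ⟨t, ⟨ht₀, le_rfl⟩, rfl⟩) ⟨h.symm (γ t), htW, ?_⟩
  rw [Function.iterate_succ_apply, Function.iterate_one, h.apply_symm_apply]

end TranslationSegment

theorem periodForcesFixedPoint_of_forall_lt (hn : 3 ≤ n)
    (hmin : ∀ m, 0 < m → m < n → PeriodForcesFixedPoint E m) : PeriodForcesFixedPoint E n := by
  intro h hI hfix z hz
  obtain ⟨u, s, hγ | hγ⟩ :=
    exists_translationSegment (γ := AffineMap.lineMap z (h z)) hfix (by simp)
  · exact hγ.iterate_ne hI hfix hn hmin (by simpa using hz)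
  · refine hγ.iterate_ne hI.symm (fun x hx => hfix x (h.symm_apply_eq.1 hx).symm) hn hmin ?_
    have hinv := Function.LeftInverse.iterate h.symm_apply_apply n z
    rw [hz] at hinv
    simpa using hinv

theorem periodForcesFixedPoint_complex (hn : 0 < n) : PeriodForcesFixedPoint ℂ n := by
  induction n using Nat.strong_induction_on with
  | _ n ih =>
    rcases Nat.lt_or_ge n 3 with hlt | hge
    · interval_cases n
      · exact fun h _ hfix => hfix
      · exact fun h hI hfix => hI.apply_apply_ne hfix
    · exact periodForcesFixedPoint_of_forall_lt hge fun m hm hmn => ih m hmn hm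

/- Among the iterates of `σ` some index repeats, so closing the chain up produces a periodic
point. -/
theorem not_freeChain {h : ℂ ≃ₜ ℂ} (hI : IsotopicToId h) (hfix : ∀ x, h x ≠ x) {ι : Type*}
    {s : Finset ι} (hs : s.Nonempty) {V : ι → Set ℂ} {d e : ι → ℂ} {σ : ι → ι} {τ : ι → ℕ} :
    ¬ FreeChain h s V d e σ τ := by
  intro hc
  obtain ⟨i, hi⟩ := hs
  have hmem (m : ℕ) : σ^[m] i ∈ s := hc.mapsTo.iterate m hi
  obtain ⟨k, l, hkl, hrep⟩ : ∃ k l, k < l ∧ σ^[k] i = σ^[l] i :=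
    s.finite_toSet.exists_lt_map_eq_of_forall_mem hmem
  obtain ⟨h', hI', hfix', hper⟩ := hc.exists_iterate_eq hI hfix
  have hx := hper (l - k) _ (hmem k)
  rw [← Function.iterate_add_apply, Nat.sub_add_cancel hkl.le, ← hrep] at hx
  refine periodForcesFixedPoint_complex ?_ h' hI' hfix' _ hx
  exact Finset.sum_pos (fun j _ => hc.time_pos _ (hc.mapsTo.iterate j (hmem k)))
    (Finset.nonempty_range_iff.2 (by lia))

end Brouwer

/-! ### Lifting an isotopy through the exponential -/

/-- The periods `n ↦ 2πin` of the exponential. -/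
def expPeriod : ℤ →+ ℂ := zmultiplesHom ℂ (2 * Real.pi * Complex.I)

theorem expPeriod_apply (n : ℤ) : expPeriod n = n * (2 * Real.pi * Complex.I) := by
  simp [expPeriod]

theorem expPeriod_im (n : ℤ) : (expPeriod n).im = n * (2 * Real.pi) := by
  simp [expPeriod_apply]

theorem expPeriod_im_div (n : ℤ) : (expPeriod n).im / (2 * Real.pi) = n := by
  rw [expPeriod_im, mul_div_assoc, div_self (by positivity), mul_one]

theorem expPeriod_injective : Function.Injective expPeriod := fun m n h => by
  exact_mod_cast (expPeriod_im_div m).symm.trans (h ▸ expPeriod_im_div n)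

theorem exp_add_expPeriod (w : ℂ) (n : ℤ) : Complex.exp (w + expPeriod n) = Complex.exp w :=
  Complex.exp_eq_exp_iff_exists_int.2 ⟨n, by rw [expPeriod_apply]⟩

theorem exists_eq_add_expPeriod {v w : ℂ} (h : Complex.exp v = Complex.exp w) :
    ∃ n : ℤ, v = w + expPeriod n := by
  simpa only [expPeriod_apply] using Complex.exp_eq_exp_iff_exists_int.1 h

/-- The isotopy `J` lifts `I` through `w ↦ c + exp w`: it describes, in logarithmic polar
coordinates, how the isotopy `I` moves points relative to the moving point `I.F t c`. -/
def IsLogLift {f g : ℂ ≃ₜ ℂ} (J : HIsotopy g) (I : HIsotopy f) (c : ℂ) : Prop :=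
  ∀ t w, Complex.exp (J.F t w) = I.F t (c + Complex.exp w) - I.F t c

theorem exists_continuous_log_of_apply_zero {Φ : ℝ × ℂ → ℂ} (hΦ : Continuous Φ)
    (hΦ₀ : ∀ p, Φ p ≠ 0) (hzero : ∀ w, Φ (0, w) = Complex.exp w) :
    ∃ G : ℝ × ℂ → ℂ, Continuous G ∧ (∀ w, G (0, w) = w) ∧ ∀ p, Complex.exp (G p) = Φ p := by
  obtain ⟨G, hG, hG₀, hexp⟩ := exists_continuous_log_apply_eq hΦ hΦ₀ (hzero 0).symm
  exact ⟨G, hG, eq_of_exp_eq (by fun_prop) continuous_id (by simp [hexp, hzero]) hG₀, hexp⟩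

/-- The isotopy whose homeomorphism at time `t` is `w ↦ G (t, w)`, with inverse `w ↦ H (t, w)`. -/
def isotopyOfInverse {X : Type*} [TopologicalSpace X] (G H : ℝ × X → X) (hG : Continuous G)
    (hH : Continuous H) (hHG : ∀ t x, H (t, G (t, x)) = x) (hGH : ∀ t x, G (t, H (t, x)) = x)
    (hG₀ : ∀ x, G (0, x) = x) :
    HIsotopy (⟨⟨fun x => G (1, x), fun x => H (1, x), hHG 1, hGH 1⟩, by fun_prop, by fun_prop⟩ :
      X ≃ₜ X) where
  F t := ⟨⟨fun x => G (t, x), fun x => H (t, x), hHG t, hGH t⟩, by fun_prop, by fun_prop⟩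
  cont := hG
  cont_symm := hH
  zero := Homeomorph.ext hG₀
  one := rfl

theorem HIsotopy.continuous_path {X : Type*} [TopologicalSpace X] {f : X ≃ₜ X} (I : HIsotopy f)
    (x : X) : Continuous fun t => I.F t x :=
  I.cont.comp (continuous_id.prodMk continuous_const)

theorem exists_isLogLift {f : ℂ ≃ₜ ℂ} (I : HIsotopy f) (c : ℂ) :
    ∃ (g : ℂ ≃ₜ ℂ) (J : HIsotopy g), IsLogLift J I c := by
  have hbase : Continuous fun p : ℝ × ℂ => I.F p.1 c :=
    (I.continuous_path c).comp continuous_fst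
  have hpath : Continuous fun p : ℝ × ℂ => I.F p.1 (c + Complex.exp p.2) :=
    I.cont.comp (f := fun p : ℝ × ℂ => (p.1, c + Complex.exp p.2)) (by fun_prop)
  obtain ⟨G, hG, hG₀, hexpG⟩ := exists_continuous_log_of_apply_zero
    (Φ := fun p => I.F p.1 (c + Complex.exp p.2) - I.F p.1 c)
    (hpath.sub hbase)
    (fun p => sub_ne_zero.2 ((I.F p.1).injective.ne (by simp))) (by simp [I.zero])
  obtain ⟨H, hH, hH₀, hexpH⟩ := exists_continuous_log_of_apply_zero
    (Φ := fun p => (I.F p.1).symm (I.F p.1 c + Complex.exp p.2) - c)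
    ((I.cont_symm.comp (continuous_fst.prodMk (hbase.add (by fun_prop)))).sub continuous_const)
    (fun p => by simp [sub_eq_zero, Homeomorph.symm_apply_eq])
    (fun w => by
      have hsymm (x : ℂ) : (I.F 0).symm x = x := by simp [I.zero]
      rw [hsymm, I.zero]
      simp)
  have hHG (t w) : H (t, G (t, w)) = w :=
    eq_of_exp_eq (K := fun t => H (t, G (t, w))) (L := fun _ => w) (by fun_prop) (by fun_prop)
      (by simp [hexpH, hexpG]) (a := 0) (by rw [hG₀, hH₀]) t
  have hGH (t w) : G (t, H (t, w)) = w :=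
    eq_of_exp_eq (K := fun t => G (t, H (t, w))) (L := fun _ => w) (by fun_prop) (by fun_prop)
      (by simp [hexpH, hexpG]) (a := 0) (by rw [hH₀, hG₀]) t
  exact ⟨_, isotopyOfInverse G H hG hH hHG hGH hG₀, fun t w => hexpG (t, w)⟩

theorem isotopicToId_addRight (v : ℂ) : IsotopicToId (Homeomorph.addRight v) :=
  ⟨fun t w => w + t * v, by fun_prop, fun t => add_left_injective _, by simp, by simp⟩

/-- The lift `g` followed by the deck transformation `w ↦ w - 2πip`. -/
def deckShift (g : ℂ ≃ₜ ℂ) (p : ℤ) : ℂ ≃ₜ ℂ := g.trans (Homeomorph.addRight (-expPeriod p))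

theorem deckShift_apply (g : ℂ ≃ₜ ℂ) (p : ℤ) (w : ℂ) : deckShift g p w = g w - expPeriod p := by
  simp [deckShift, sub_eq_add_neg]

theorem HIsotopy.isotopicToId_deckShift {g : ℂ ≃ₜ ℂ} (J : HIsotopy g) (p : ℤ) :
    IsotopicToId (deckShift g p) :=
  J.isotopicToId.trans (isotopicToId_addRight _)

namespace IsLogLift

variable {f g : ℂ ≃ₜ ℂ} {I : HIsotopy f} {J : HIsotopy g} {c : ℂ}

theorem apply_add_expPeriod (hJ : IsLogLift J I c) (w : ℂ) (n : ℤ) :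
    g (w + expPeriod n) = g w + expPeriod n := by
  have hequi := eq_of_exp_eq (K := fun t => J.F t (w + expPeriod n))
    (L := fun t => J.F t w + expPeriod n) (J.continuous_path _)
    ((J.continuous_path w).add continuous_const)
    (fun t => by rw [exp_add_expPeriod, hJ, hJ, exp_add_expPeriod]) (a := 0) (by simp [J.zero]) 1
  rwa [J.one] at hequi

theorem iterate_deckShift_add_expPeriod (hJ : IsLogLift J I c) (p : ℤ) (n : ℕ) (w : ℂ) (j : ℤ) :
    (deckShift g p)^[n] (w + expPeriod j) = g^[n] w + expPeriod (j - n * p) := by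
  induction n with
  | zero => simp
  | succ n ih =>
    rw [Function.iterate_succ_apply', ih, Function.iterate_succ_apply', deckShift_apply,
      hJ.apply_add_expPeriod, add_sub_assoc, ← map_sub]
    push_cast
    ring_nf

theorem iterate_add_expPeriod (hJ : IsLogLift J I c) (n : ℕ) (w : ℂ) (m : ℤ) :
    g^[n] (w + expPeriod m) = g^[n] w + expPeriod m :=
  (Function.Commute.iterate_left (f := g) (g := (· + expPeriod m))
    (fun x => hJ.apply_add_expPeriod x m) n) w

theorem enlace_eq (hJ : IsLogLift J I c) (w : ℂ) :
    Enlace I (c + Complex.exp w) c = (g w - w).im / (2 * Real.pi) := by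
  rw [Enlace, angVar_eq_of_exp_eq (J.continuous_path w).continuousOn fun t _ => hJ t w, J.zero,
    J.one, Homeomorph.refl_apply, id]

theorem exp_apply (hJ : IsLogLift J I c) (hc : f c = c) (w : ℂ) :
    c + Complex.exp (g w) = f (c + Complex.exp w) := by
  have hone := hJ 1 w
  rw [J.one, I.one, hc] at hone
  rw [hone, add_sub_cancel]

theorem exp_iterate (hJ : IsLogLift J I c) (hc : f c = c) (n : ℕ) (w : ℂ) :
    c + Complex.exp (g^[n] w) = f^[n] (c + Complex.exp w) :=
  (Function.Semiconj.iterate_right (f := fun w => c + Complex.exp w) (hJ.exp_apply hc) n) w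

theorem sum_enlace (hJ : IsLogLift J I c) (hc : f c = c) (n : ℕ) (w : ℂ) :
    ∑ r ∈ Finset.range n, Enlace I (f^[r] (c + Complex.exp w)) c =
      (g^[n] w - w).im / (2 * Real.pi) := by
  have hstep (r : ℕ) : Enlace I (f^[r] (c + Complex.exp w)) c =
      (g^[r + 1] w).im / (2 * Real.pi) - (g^[r] w).im / (2 * Real.pi) := by
    rw [← hJ.exp_iterate hc, hJ.enlace_eq, ← Function.iterate_succ_apply' g, Complex.sub_im,
      sub_div]
  simp only [hstep]
  rw [Finset.sum_range_sub (fun r => (g^[r] w).im / (2 * Real.pi)), Complex.sub_im, sub_div]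
  rfl

theorem deckShift_apply_ne (hJ : IsLogLift J I c) (hc : f c = c) {p : ℤ}
    (hp : ∀ z, f z = z → z ≠ c → Enlace I z c ≠ p) (w : ℂ) : deckShift g p w ≠ w := by
  intro hw
  have hgw : g w = w + expPeriod p := by rw [← sub_eq_iff_eq_add, ← deckShift_apply, hw]
  refine hp (c + Complex.exp w) ?_ (by simp) ?_
  · rw [← hJ.exp_apply hc, hgw, exp_add_expPeriod]
  · rw [hJ.enlace_eq, hgw, add_sub_cancel_left, expPeriod_im_div]

end IsLogLift

/-! ### First returns and sheets of the logarithm -/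

section ReturnTime

variable {f : ℂ ≃ₜ ℂ} {U : Set ℂ} {z : ℂ} {n : ℕ}

theorem retTime_le (hn : 0 < n) (hz : f^[n] z ∈ U) : retTime f U z ≤ n :=
  Nat.sInf_le ⟨hn, hz⟩

theorem retTime_spec (h : 0 < retTime f U z) : f^[retTime f U z] z ∈ U :=
  (Nat.sInf_mem (Nat.nonempty_of_pos_sInf h)).2

theorem retTime_pos (hn : 0 < n) (hz : f^[n] z ∈ U) : 0 < retTime f U z :=
  (Nat.sInf_mem (s := {n | 0 < n ∧ f^[n] z ∈ U}) ⟨n, hn, hz⟩).1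

theorem iterate_retTime_mem (hz : z ∈ U) : f^[retTime f U z] z ∈ U := by
  rcases Nat.eq_zero_or_pos (retTime f U z) with h | h
  · rwa [h]
  · exact retTime_spec h

theorem iterate_notMem_of_lt_retTime (hn : 0 < n) (hlt : n < retTime f U z) : f^[n] z ∉ U :=
  fun hz => (retTime_le hn hz).not_gt hlt

end ReturnTime

/-- `L` is a continuous branch of `x ↦ log (x - c)` on `U`. -/
structure LogBranch (c : ℂ) (U : Set ℂ) (L : ℂ → ℂ) : Prop where
  continuousOn : ContinuousOn L U
  add_exp : ∀ x ∈ U, c + Complex.exp (L x) = x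

theorem exists_logBranch {U : Set ℂ} [SimplyConnectedSpace U] (hU : IsOpen U) {c : ℂ}
    (hc : c ∉ U) : ∃ L, LogBranch c U L := by
  have : LocallyPathConnectedSpace U := hU.locallyPathConnectedSpace
  obtain ⟨L, hL, hexp⟩ := exists_continuous_log (A := U) (g := fun x => (x : ℂ) - c)
    (by fun_prop) fun x => sub_ne_zero.2 fun h => hc (h ▸ x.2)
  have hext (x : U) : Function.extend Subtype.val L 0 x = L x :=
    Subtype.val_injective.extend_apply L 0 x
  refine ⟨Function.extend Subtype.val L 0, ?_, fun x hx => ?_⟩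
  · rw [continuousOn_iff_continuous_domRestrict]
    exact hL.congr fun x => (hext x).symm
  · rw [hext ⟨x, hx⟩, hexp, add_sub_cancel]

/-- The `j`-th preimage of `U` under `w ↦ c + exp w`, for a branch `L` of `x ↦ log (x - c)`. -/
def logSheet (L : ℂ → ℂ) (U : Set ℂ) (j : ℤ) : Set ℂ := (fun x => L x + expPeriod j) '' U

theorem mem_logSheet {L : ℂ → ℂ} {U : Set ℂ} {x : ℂ} (hx : x ∈ U) (j : ℤ) :
    L x + expPeriod j ∈ logSheet L U j :=
  mem_image_of_mem _ hx

namespace LogBranch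

variable {c : ℂ} {U : Set ℂ} {L : ℂ → ℂ}

theorem add_exp_add_expPeriod (hL : LogBranch c U L) {x : ℂ} (hx : x ∈ U) (j : ℤ) :
    c + Complex.exp (L x + expPeriod j) = x := by
  rw [exp_add_expPeriod, hL.add_exp x hx]

theorem add_exp_mem_of_mem_logSheet (hL : LogBranch c U L) {w : ℂ} {j : ℤ}
    (hw : w ∈ logSheet L U j) :
    c + Complex.exp w ∈ U := by
  obtain ⟨x, hx, rfl⟩ := hw
  rwa [hL.add_exp_add_expPeriod hx]

theorem disjoint_logSheet (hL : LogBranch c U L) {i j : ℤ} (hij : i ≠ j) :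
    Disjoint (logSheet L U i) (logSheet L U j) := by
  refine disjoint_left.2 ?_
  rintro _ ⟨x, hx, rfl⟩ ⟨y, hy, hxy⟩
  have hyx : y = x := by
    rw [← hL.add_exp_add_expPeriod hy j, ← hL.add_exp_add_expPeriod hx i]
    exact congrArg (fun w => c + Complex.exp w) hxy
  rw [hyx] at hxy
  exact hij (expPeriod_injective (add_left_cancel hxy).symm)

theorem isOpen_logSheet (hL : LogBranch c U L) (hU : IsOpen U) (j : ℤ) :
    IsOpen (logSheet L U j) := by
  have hcov : Continuous fun w => c + Complex.exp w := by fun_prop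
  refine Metric.isOpen_iff.2 ?_
  rintro _ ⟨x, hx, rfl⟩
  obtain ⟨r, hr, hball⟩ := Metric.isOpen_iff.1 (hU.preimage hcov) (L x + expPeriod j)
    (by rwa [mem_preimage, hL.add_exp_add_expPeriod hx])
  refine ⟨r, hr, fun w hw => ⟨c + Complex.exp w, hball hw, ?_⟩⟩
  have hlift := sub_eq_sub_of_exp_eq (convex_ball (L x + expPeriod j) r).isPreconnected
    (K := fun w => L (c + Complex.exp w)) (hL.continuousOn.comp hcov.continuousOn hball)
    continuousOn_id (fun y hy => add_left_cancel (hL.add_exp _ (hball hy))) hw (mem_ball_self hr)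
  rw [hL.add_exp_add_expPeriod hx, id, id] at hlift
  linear_combination hlift

end LogBranch

section Sheets

variable {f g : ℂ ≃ₜ ℂ} {I : HIsotopy f} {J : HIsotopy g} {c : ℂ} {U : Set ℂ} {L : ℂ → ℂ} {p : ℤ}

theorem add_exp_iterate_deckShift (hJ : IsLogLift J I c) (hc : f c = c) (hL : LogBranch c U L)
    {x : ℂ} (hx : x ∈ U) (n : ℕ) (j : ℤ) :
    c + Complex.exp ((deckShift g p)^[n] (L x + expPeriod j)) = f^[n] x := by
  rw [hJ.iterate_deckShift_add_expPeriod, exp_add_expPeriod, hJ.exp_iterate hc, hL.add_exp x hx]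

theorem iterate_deckShift_notMem_logSheet (hJ : IsLogLift J I c) (hc : f c = c)
    (hL : LogBranch c U L) {x : ℂ} (hx : x ∈ U) {n : ℕ} (hn : f^[n] x ∉ U) (i j : ℤ) :
    (deckShift g p)^[n] (L x + expPeriod i) ∉ logSheet L U j := fun hmem =>
  hn (add_exp_iterate_deckShift hJ hc hL hx n i ▸ hL.add_exp_mem_of_mem_logSheet hmem)

theorem FreeRegion.freeRegion_logSheet (hU : FreeRegion f U) (hJ : IsLogLift J I c) (hc : f c = c)
    (hL : LogBranch c U L) (j : ℤ) : FreeRegion (deckShift g p) (logSheet L U j) where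
  isOpen := hL.isOpen_logSheet hU.isOpen j
  isPreconnected := hU.isPreconnected.image _ (hL.continuousOn.add continuousOn_const)
  mapsTo_compl := by
    rintro _ ⟨x, hx, rfl⟩
    exact iterate_deckShift_notMem_logSheet hJ hc hL hx (n := 1) (hU.mapsTo_compl hx) j j

theorem FreeRegion.freeFamily_logSheet (hU : FreeRegion f U) (hJ : IsLogLift J I c) (hc : f c = c)
    (hL : LogBranch c U L) (s : Finset ℤ) : FreeFamily (deckShift g p) s (logSheet L U) where
  freeRegion j _ := hU.freeRegion_logSheet hJ hc hL j
  pairwiseDisjoint _ _ _ _ hij := hL.disjoint_logSheet hij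

theorem exists_iterate_lift_eq (hJ : IsLogLift J I c) (hc : f c = c) (hL : LogBranch c U L)
    {x : ℂ} (hx : x ∈ U) {n : ℕ} (hn : f^[n] x ∈ U) :
    ∃ m : ℤ, g^[n] (L x) = L (f^[n] x) + expPeriod m := by
  refine exists_eq_add_expPeriod (add_left_cancel (a := c) ?_)
  rw [hJ.exp_iterate hc, hL.add_exp x hx, hL.add_exp _ hn]

/- Going up from a sheet `j > 0` means following the orbit of `z` and descending `a` sheets; from
a sheet `j ≤ 0` one follows the orbit of `w` and climbs `b` sheets, so one stays in `(-a, b]`. -/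
theorem FreeRegion.exists_freeChain_logSheet (hU : FreeRegion f U) (hJ : IsLogLift J I c)
    (hc : f c = c) (hL : LogBranch c U L) {z w : ℂ} (hz : z ∈ U) (hw : w ∈ U)
    (hzr : 0 < retTime f U z) (hwr : 0 < retTime f U w) {a b : ℤ} (ha : 0 < a) (hb : 0 < b)
    (hza : g^[retTime f U z] (L z) =
      L (f^[retTime f U z] z) + expPeriod (retTime f U z * p - a))
    (hwb : g^[retTime f U w] (L w) =
      L (f^[retTime f U w] w) + expPeriod (retTime f U w * p + b)) :
    ∃ d e σ τ, FreeChain (deckShift g p) (Finset.Ioc (-a) b) (logSheet L U) d e σ τ := by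
  let start (j : ℤ) : ℂ := if 0 < j then z else w
  let source (j : ℤ) : ℂ := if j ≤ b - a then z else w
  have hstart (j : ℤ) : start j ∈ U ∧ 0 < retTime f U (start j) := by grind
  have hsource (j : ℤ) : f^[retTime f U (source j)] (source j) ∈ U := iterate_retTime_mem (by grind)
  refine ⟨fun j => L (start j) + expPeriod j,
    fun j => L (f^[retTime f U (source j)] (source j)) + expPeriod j,
    fun j => if 0 < j then j - a else j + b, fun j => retTime f U (start j),
    hU.freeFamily_logSheet hJ hc hL _, fun j _ => mem_logSheet (hstart j).1 j,
    fun j _ => mem_logSheet (hsource j) j, fun j hj => ?_, fun j _ => (hstart j).2, fun j hj => ?_,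
    fun j _ k hk hkr i _ => iterate_deckShift_notMem_logSheet hJ hc hL (hstart j).1
      (iterate_notMem_of_lt_retTime hk hkr) j i⟩
  · simp only [Finset.coe_Ioc, mem_Ioc] at hj ⊢
    split_ifs <;> lia
  · rw [Finset.mem_Ioc] at hj
    rw [hJ.iterate_deckShift_add_expPeriod]
    by_cases hpos : 0 < j
    · rw [show start j = z from if_pos hpos, if_pos hpos,
        show source (j - a) = z from if_pos (by lia), hza, add_assoc, ← map_add]
      ring_nf
    · rw [show start j = w from if_neg hpos, if_neg hpos,
        show source (j + b) = w from if_neg (by lia), hwb, add_assoc, ← map_add]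
      ring_nf

end Sheets

/-! ### The turning number of a first return -/

theorem exists_isPathIn {U : Set ℂ} (hUo : IsOpen U) (hUc : IsPreconnected U) {x y : ℂ}
    (hx : x ∈ U) (hy : y ∈ U) : ∃ γ, IsPathIn U x y γ := by
  obtain ⟨γ, hγ⟩ := (hUo.isConnected_iff_isPathConnected.1 ⟨⟨x, hx⟩, hUc⟩).joinedIn x hx y hy
  refine ⟨γ.extend, γ.continuous_extend.continuousOn, fun t ht => ?_, γ.extend_zero, γ.extend_one⟩
  rw [γ.extend_apply ht]
  exact hγ _

theorem IsPathIn.angVar_sub_eq {c : ℂ} {U : Set ℂ} {L : ℂ → ℂ} (hL : LogBranch c U L) {x y : ℂ}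
    {γ : ℝ → ℂ} (hγ : IsPathIn U x y γ) :
    angVar (fun t => γ t - c) = (L y - L x).im / (2 * Real.pi) := by
  obtain ⟨hcont, hmem, hzero, hone⟩ := hγ
  rw [angVar_eq_of_exp_eq (L := fun t => L (γ t)) (hL.continuousOn.comp hcont hmem)
    fun t ht => eq_sub_of_add_eq' (hL.add_exp _ (hmem t ht)), hzero, hone]

/-- When `x` and `f^[n] x` lie in the domain of the branch `L`, this is the number of turns of the
orbit of `x` during `n` steps, closed up inside the domain of `L`; it is then an integer. -/
def turnCount (f g : ℂ ≃ₜ ℂ) (L : ℂ → ℂ) (n : ℕ) (x : ℂ) : ℝ :=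
  (g^[n] (L x) - L (f^[n] x)).im / (2 * Real.pi)

section TurnCount

variable {f g : ℂ ≃ₜ ℂ} {I : HIsotopy f} {J : HIsotopy g} {c : ℂ} {U : Set ℂ} {L : ℂ → ℂ}

@[simp]
theorem turnCount_zero (x : ℂ) : turnCount f g L 0 x = 0 := by
  simp [turnCount]

theorem exists_turnCount_eq (hJ : IsLogLift J I c) (hc : f c = c) (hL : LogBranch c U L) {x : ℂ}
    (hx : x ∈ U) {n : ℕ} (hn : f^[n] x ∈ U) :
    ∃ m : ℤ, turnCount f g L n x = m ∧ g^[n] (L x) = L (f^[n] x) + expPeriod m := by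
  obtain ⟨m, hm⟩ := exists_iterate_lift_eq hJ hc hL hx hn
  exact ⟨m, by rw [turnCount, hm, add_sub_cancel_left, expPeriod_im_div], hm⟩

theorem turnCount_add (hJ : IsLogLift J I c) (hc : f c = c) (hL : LogBranch c U L) {x : ℂ}
    (hx : x ∈ U) {n : ℕ} (hn : f^[n] x ∈ U) (k : ℕ) :
    turnCount f g L (k + n) x = turnCount f g L n x + turnCount f g L k (f^[n] x) := by
  obtain ⟨m, hm, hlift⟩ := exists_turnCount_eq hJ hc hL hx hn
  rw [hm, turnCount, turnCount, Function.iterate_add_apply, Function.iterate_add_apply, hlift,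
    hJ.iterate_add_expPeriod, add_sub_right_comm, Complex.add_im, add_div, expPeriod_im_div,
    add_comm]

theorem sum_enlace_iterate_eq (hJ : IsLogLift J I c) (hc : f c = c) (hL : LogBranch c U L) {x : ℂ}
    (hx : x ∈ U) {n : ℕ} (hn : f^[n] x ∈ U) (k : ℕ) :
    ∑ r ∈ Finset.range n, Enlace I (f^[r] (f^[k] x)) c =
      turnCount f g L n x + (g^[k] (L (f^[n] x)) - g^[k] (L x)).im / (2 * Real.pi) := by
  obtain ⟨m, hm, hlift⟩ := exists_turnCount_eq hJ hc hL hx hn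
  have hsum := hJ.sum_enlace hc n (g^[k] (L x))
  rw [hJ.exp_iterate hc, hL.add_exp x hx] at hsum
  rw [hsum, hm, ← expPeriod_im_div m, ← add_div, ← Complex.add_im,
    (Function.Commute.iterate_iterate_self g n k).eq, hlift, hJ.iterate_add_expPeriod]
  ring_nf

theorem alphaU_eq_turnCount (hU : FreeRegion f U) (hJ : IsLogLift J I c) (hc : f c = c)
    (hL : LogBranch c U L) {x : ℂ} (hx : x ∈ U) :
    alphaU I U c x = turnCount f g L (retTime f U x) x := by
  have hret := iterate_retTime_mem (f := f) hx
  have hpath := exists_isPathIn hU.isOpen hU.isPreconnected hret hx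
  have hsum := sum_enlace_iterate_eq hJ hc hL hx hret 0
  simp only [Function.iterate_zero, id] at hsum
  rw [alphaU, dif_pos hpath, hpath.choose_spec.angVar_sub_eq hL, hsum, Complex.sub_im,
    Complex.sub_im]
  ring

theorem alphaU_le_retTime_mul (hU : FreeRegion f U) (hJ : IsLogLift J I c) (hc : f c = c)
    (hL : LogBranch c U L) {p : ℤ} (hp : ∀ z, f z = z → z ≠ c → Enlace I z c ≠ p) {z w : ℂ}
    (hz : z ∈ U) (hw : w ∈ U) (hzr : 0 < retTime f U z) (hwr : 0 < retTime f U w)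
    (hlt : alphaU I U c z < retTime f U z * p) : alphaU I U c w ≤ retTime f U w * p := by
  obtain ⟨m, hm, hza⟩ := exists_turnCount_eq hJ hc hL hz (iterate_retTime_mem hz)
  obtain ⟨n, hn, hwb⟩ := exists_turnCount_eq hJ hc hL hw (iterate_retTime_mem hw)
  rw [alphaU_eq_turnCount hU hJ hc hL hz, hm] at hlt
  rw [alphaU_eq_turnCount hU hJ hc hL hw, hn]
  by_contra! hgt
  have ha : 0 < retTime f U z * p - m := sub_pos.2 (by exact_mod_cast hlt)
  have hb : 0 < n - retTime f U w * p := sub_pos.2 (by exact_mod_cast hgt)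
  rw [← sub_sub_cancel (retTime f U z * p) m] at hza
  rw [← add_sub_cancel (retTime f U w * p) n] at hwb
  obtain ⟨d, e, σ, τ, hchain⟩ := hU.exists_freeChain_logSheet hJ hc hL hz hw hzr hwr ha hb hza hwb
  exact not_freeChain (J.isotopicToId_deckShift p) (hJ.deckShift_apply_ne hc hp)
    ⟨n - retTime f U w * p, Finset.mem_Ioc.2 ⟨by lia, le_rfl⟩⟩ hchain

/- Comparing an arbitrary return with one fixed return, whose average turning number lies strictly
between `-p` and `p`, bounds all the average turning numbers by `p`. -/
theorem exists_abs_alphaU_le (hU : FreeRegion f U) (hJ : IsLogLift J I c) (hc : f c = c)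
    (hL : LogBranch c U L) {M : ℝ} (hM : ∀ z, f z = z → z ≠ c → |Enlace I z c| ≤ M) :
    ∃ C : ℝ, ∀ z ∈ U, |alphaU I U c z| ≤ C * retTime f U z := by
  by_cases hret : ∃ z ∈ U, 0 < retTime f U z
  · obtain ⟨z, hz, hzr⟩ := hret
    obtain ⟨p, hp⟩ := exists_nat_gt (max M |alphaU I U c z|)
    rw [max_lt_iff] at hp
    have hzp : |alphaU I U c z| < retTime f U z * p :=
      hp.2.trans_le (le_mul_of_one_le_left p.cast_nonneg (Nat.one_le_cast.2 hzr))
    rw [abs_lt] at hzp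
    have hne (q : ℤ) (hq : |(q : ℝ)| = p) (y : ℂ) (hy : f y = y) (hyc : y ≠ c) :
        Enlace I y c ≠ q := fun h => by
      have hle := hM y hy hyc
      rw [h, hq] at hle
      exact hp.1.not_ge hle
    refine ⟨p, fun w hw => ?_⟩
    rcases Nat.eq_zero_or_pos (retTime f U w) with hwr | hwr
    · simp [alphaU_eq_turnCount hU hJ hc hL hw, hwr]
    · refine abs_le.2 ⟨?_, ?_⟩
      · by_contra! hlt
        have hle := alphaU_le_retTime_mul hU hJ hc hL (hne (-p) (by simp)) hw hz hwr hzr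
          (by push_cast; linarith)
        push_cast at hle
        linarith
      · have hle := alphaU_le_retTime_mul hU hJ hc hL (hne p (by simp)) hz hw hzr hwr
          (by push_cast; linarith)
        push_cast at hle
        linarith
  · refine ⟨0, fun z hz => ?_⟩
    have hzr : retTime f U z = 0 := Nat.eq_zero_of_not_pos fun h => hret ⟨z, hz, h⟩
    simp [alphaU_eq_turnCount hU hJ hc hL hz, hzr]

end TurnCount

/-! ### Birkhoff's ergodic theorem -/

section Birkhoff

variable {α : Type*} [MeasurableSpace α] {μ : Measure α} {f : α → α} {h : α → ℝ}

theorem measurable_birkhoffSum (hf : Measurable f) (hh : Measurable h) (n : ℕ) :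
    Measurable (birkhoffSum f h n) :=
  Finset.measurable_fun_sum _ fun i _ => hh.comp (hf.iterate i)

theorem integrable_birkhoffSum (hf : MeasurePreserving f μ μ) (hh : Integrable h μ) (n : ℕ) :
    Integrable (birkhoffSum f h n) μ :=
  integrable_finsetSum _ fun i _ => (hf.iterate i).integrable_comp_of_integrable hh

theorem measurable_partialSups_birkhoffSum (hf : Measurable f) (hh : Measurable h) (N : ℕ) :
    Measurable (partialSups (birkhoffSum f h) N) := by
  induction N with
  | zero => exact measurable_birkhoffSum hf hh 0
  | succ N ih =>
    rw [partialSups_add_one]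
    exact ih.sup (measurable_birkhoffSum hf hh _)

theorem integrable_partialSups_birkhoffSum (hf : MeasurePreserving f μ μ) (hh : Integrable h μ)
    (N : ℕ) : Integrable (partialSups (birkhoffSum f h) N) μ := by
  induction N with
  | zero => exact integrable_birkhoffSum hf hh 0
  | succ N ih =>
    rw [partialSups_add_one]
    exact ih.sup (integrable_birkhoffSum hf hh _)

theorem partialSups_birkhoffSum_nonneg {α : Type*} (f : α → α) (h : α → ℝ) (N : ℕ) (x : α) :
    0 ≤ partialSups (birkhoffSum f h) N x :=
  le_partialSups_of_le (birkhoffSum f h) N.zero_le x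

theorem partialSups_birkhoffSum_le {α : Type*} (f : α → α) (h : α → ℝ) (N : ℕ) (x : α) :
    partialSups (birkhoffSum f h) N x ≤
      max 0 (h x + partialSups (birkhoffSum f h) N (f x)) := by
  rw [Pi.partialSups_apply]
  refine partialSups_le _ N _ fun i hi => ?_
  cases i with
  | zero => exact le_max_left _ _
  | succ i =>
    rw [birkhoffSum_succ']
    exact le_max_of_le_right
      (add_le_add_right (le_partialSups_of_le (birkhoffSum f h) (Nat.le_of_succ_le hi) (f x)) _)

theorem partialSups_birkhoffSum_sub_le {α : Type*} (f : α → α) (h : α → ℝ) (N : ℕ) (x : α) :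
    partialSups (birkhoffSum f h) N x - partialSups (birkhoffSum f h) N (f x) ≤
      {x | 0 < partialSups (birkhoffSum f h) N x}.indicator h x := by
  by_cases hx : 0 < partialSups (birkhoffSum f h) N x
  · rw [indicator_of_mem (by exact hx), sub_le_iff_le_add]
    exact (le_max_iff.1 (partialSups_birkhoffSum_le f h N x)).resolve_left hx.not_ge
  · rw [indicator_of_notMem (by exact hx), sub_nonpos]
    exact (not_lt.1 hx).trans (partialSups_birkhoffSum_nonneg f h N (f x))

theorem setIntegral_iUnion_partialSups_birkhoffSum_nonneg (hf : MeasurePreserving f μ μ)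
    (hm : Measurable h) (hh : Integrable h μ) :
    0 ≤ ∫ x in ⋃ N, {x | 0 < partialSups (birkhoffSum f h) N x}, h x ∂μ := by
  set M := partialSups (birkhoffSum f h)
  have hmeas (N : ℕ) : Measurable (M N) := measurable_partialSups_birkhoffSum hf.measurable hm N
  have hpos (N : ℕ) : MeasurableSet {x | 0 < M N x} := measurableSet_lt measurable_const (hmeas N)
  have hmono : Monotone fun N => {x | 0 < M N x} :=
    fun _ _ hle x hx => lt_of_lt_of_le hx (M.monotone hle x)
  refine ge_of_tendsto' (tendsto_setIntegral_of_monotone hpos hmono hh.integrableOn) fun N => ?_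
  have hint : Integrable (M N) μ := integrable_partialSups_birkhoffSum hf hh N
  have hintf : Integrable (fun x => M N (f x)) μ := hf.integrable_comp_of_integrable hint
  calc (0 : ℝ) = ∫ x, (M N x - M N (f x)) ∂μ := by
        rw [integral_sub hint hintf, sub_eq_zero.2]
        conv_lhs => rw [← hf.map_eq]
        exact integral_map hf.measurable.aemeasurable (hmeas N).aestronglyMeasurable
    _ ≤ ∫ x, {x | 0 < M N x}.indicator h x ∂μ :=
        integral_mono (hint.sub hintf) (hh.indicator (hpos N))
          (partialSups_birkhoffSum_sub_le f h N)
    _ = ∫ x in {x | 0 < M N x}, h x ∂μ := integral_indicator (hpos N)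

theorem preimage_setOf_bddAbove_birkhoffSum {α : Type*} (f : α → α) (h : α → ℝ) :
    f ⁻¹' {x | BddAbove (range fun n => birkhoffSum f h n x)} =
      {x | BddAbove (range fun n => birkhoffSum f h n x)} := by
  ext x
  have hrange : range (fun n => birkhoffSum f h n x) =
      insert 0 (OrderIso.addLeft (h x) '' range fun n => birkhoffSum f h n (f x)) := by
    rw [← Nat.range_of_succ, ← range_comp, insert_eq, birkhoffSum_zero]
    congr 2
    exact funext fun n => birkhoffSum_succ' f h n x
  rw [mem_preimage, mem_ofPred, mem_ofPred, hrange, bddAbove_insert, OrderIso.bddAbove_image]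

theorem birkhoffSum_indicator {α : Type*} {f : α → α} {s : Set α} (hs : f ⁻¹' s = s) (h : α → ℝ)
    (n : ℕ) : birkhoffSum f (s.indicator h) n = s.indicator (birkhoffSum f h n) := by
  ext x
  have hmem (i : ℕ) : f^[i] x ∈ s ↔ x ∈ s := by
    rw [← mem_preimage, preimage_iterate_eq, Function.iterate_fixed hs]
  by_cases hx : x ∈ s <;> simp [birkhoffSum, indicator, hmem, hx]

theorem ae_bddAbove_birkhoffSum (hf : MeasurePreserving f μ μ) (hm : Measurable h)
    (hh : Integrable h μ)
    (hneg : ∀ s, MeasurableSet s → f ⁻¹' s = s → μ s ≠ 0 → ∫ x in s, h x ∂μ < 0) :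
    ∀ᵐ x ∂μ, BddAbove (range fun n => birkhoffSum f h n x) := by
  set s := {x | BddAbove (range fun n => birkhoffSum f h n x)}ᶜ with hs
  have hsm : MeasurableSet s :=
    (measurableSet_bddAbove_range fun n => measurable_birkhoffSum hf.measurable hm n).compl
  have hsf : f ⁻¹' s = s := by
    rw [hs, preimage_compl, preimage_setOf_bddAbove_birkhoffSum]
  have hsub : s ⊆ ⋃ N, {x | 0 < partialSups (birkhoffSum f (s.indicator h)) N x} := by
    intro x hx
    obtain ⟨_, ⟨n, rfl⟩, hn⟩ := not_bddAbove_iff.1 hx 0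
    refine mem_iUnion.2 ⟨n, lt_of_lt_of_le ?_
      (le_partialSups (birkhoffSum f (s.indicator h)) n x)⟩
    rwa [birkhoffSum_indicator hsf, indicator_of_mem hx]
  have hmax := setIntegral_iUnion_partialSups_birkhoffSum_nonneg hf (hm.indicator hsm)
    (hh.indicator hsm)
  rw [setIntegral_indicator hsm, inter_eq_self_of_subset_right hsub] at hmax
  by_contra hne
  exact (hneg s hsm hsf hne).not_ge hmax

variable [IsFiniteMeasure μ]

theorem ae_forall_eventually_birkhoffSum_le (hf : MeasurePreserving f μ μ) (hm : Measurable h)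
    (hh : Integrable h μ) (hzero : ∀ s, MeasurableSet s → f ⁻¹' s = s → ∫ x in s, h x ∂μ = 0) :
    ∀ᵐ x ∂μ, ∀ ε > 0, ∀ᶠ n : ℕ in atTop, birkhoffSum f h n x ≤ n * ε := by
  have hbdd : ∀ᵐ x ∂μ, ∀ j : ℕ,
      BddAbove (range fun n => birkhoffSum f (h - fun _ => 1 / ((j : ℝ) + 1)) n x) := by
    refine ae_all_iff.2 fun j => ae_bddAbove_birkhoffSum hf (hm.sub measurable_const)
      (hh.sub (integrable_const _)) fun s hs hsf hpos => ?_
    simp only [Pi.sub_apply]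
    rw [integral_sub hh.integrableOn (integrable_const _), hzero s hs hsf, setIntegral_const,
      zero_sub, neg_lt_zero, smul_eq_mul]
    have hreal : 0 < μ.real s := ENNReal.toReal_pos hpos (measure_ne_top μ s)
    positivity
  filter_upwards [hbdd] with x hx ε hε
  obtain ⟨j, hj⟩ := exists_nat_one_div_lt hε
  obtain ⟨K, hK⟩ := hx j
  have hlarge : ∀ᶠ n : ℕ in atTop, K / (ε - 1 / ((j : ℝ) + 1)) ≤ n :=
    tendsto_natCast_atTop_atTop.eventually_ge_atTop _
  filter_upwards [hlarge] with n hn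
  have hle := hK (mem_range_self n)
  simp only [birkhoffSum_sub, birkhoffSum_of_comp_eq (f := f) (φ := fun _ => 1 / ((j : ℝ) + 1)) rfl,
    Pi.smul_apply, nsmul_eq_mul] at hle
  rw [div_le_iff₀ (sub_pos.2 hj)] at hn
  linarith

theorem tendsto_birkhoffAverage_condExp_of_measurable (hf : MeasurePreserving f μ μ)
    (hm : Measurable h) (hh : Integrable h μ) :
    ∀ᵐ x ∂μ, Tendsto (fun n => birkhoffAverage ℝ f h n x) atTop
      (𝓝 (μ[h | MeasurableSpace.invariants f] x)) := by
  set H := μ[h | MeasurableSpace.invariants f]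
  have hinv := MeasurableSpace.invariants_le f
  have hHinv : Measurable[MeasurableSpace.invariants f] H := stronglyMeasurable_condExp.measurable
  have hHm : Measurable H := hHinv.mono hinv le_rfl
  have hHi : Integrable H μ := integrable_condExp
  have hHf : H ∘ f = H := MeasurableSpace.comp_eq_of_measurable_invariants hHinv
  have hset (s) (hs : MeasurableSet s) (hsf : f ⁻¹' s = s) : ∫ x in s, H x ∂μ = ∫ x in s, h x ∂μ :=
    setIntegral_condExp hinv hh ⟨hs, hsf⟩
  have habove := ae_forall_eventually_birkhoffSum_le hf (hm.sub hHm) (hh.sub hHi) fun s hs hsf => by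
    simp only [Pi.sub_apply]
    rw [integral_sub hh.integrableOn hHi.integrableOn, hset s hs hsf, sub_self]
  have hbelow := ae_forall_eventually_birkhoffSum_le hf (hHm.sub hm) (hHi.sub hh) fun s hs hsf => by
    simp only [Pi.sub_apply]
    rw [integral_sub hHi.integrableOn hh.integrableOn, hset s hs hsf, sub_self]
  filter_upwards [habove, hbelow] with x hxa hxb
  refine Metric.tendsto_atTop'.2 fun ε hε => ?_
  obtain ⟨N, hN⟩ := eventually_atTop.1
    (((hxa _ (half_pos hε)).and (hxb _ (half_pos hε))).and (eventually_gt_atTop 0))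
  refine ⟨N, fun n hn => ?_⟩
  obtain ⟨⟨hna, hnb⟩, hpos⟩ := hN n hn.le
  simp only [birkhoffSum_sub, birkhoffSum_of_comp_eq hHf, Pi.smul_apply, nsmul_eq_mul] at hna hnb
  have hn0 : (0 : ℝ) < n := by exact_mod_cast hpos
  have hlt : n * (ε / 2) < n * ε := by gcongr; linarith
  rw [Real.dist_eq, birkhoffAverage, smul_eq_mul, inv_mul_eq_div, abs_sub_lt_iff, sub_lt_iff_lt_add,
    sub_lt_comm, div_lt_iff₀ hn0, lt_div_iff₀ hn0]
  constructor <;> linarith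

theorem tendsto_birkhoffAverage_condExp (hf : MeasurePreserving f μ μ) (hh : Integrable h μ) :
    ∀ᵐ x ∂μ, Tendsto (fun n => birkhoffAverage ℝ f h n x) atTop
      (𝓝 (μ[h | MeasurableSpace.invariants f] x)) := by
  obtain ⟨h', hm, hae⟩ := hh.aemeasurable
  have havg : ∀ᵐ x ∂μ, ∀ n, birkhoffAverage ℝ f h n x = birkhoffAverage ℝ f h' n x :=
    ae_all_iff.2 fun n =>
      hf.quasiMeasurePreserving.birkhoffAverage_ae_eq_of_ae_eq ℝ hae n
  filter_upwards [tendsto_birkhoffAverage_condExp_of_measurable hf hm (hh.congr hae), havg,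
    condExp_congr_ae (m := MeasurableSpace.invariants f) hae] with x hx hxavg hxcond
  simpa only [hxavg, hxcond] using hx

theorem setIntegral_condExp_invariants (hf : MeasurePreserving f μ μ) (hh : Integrable h μ)
    {s : Set α} (hs : MeasurableSet s) (hmaps : MapsTo f s s) :
    ∫ x in s, μ[h | MeasurableSpace.invariants f] x ∂μ = ∫ x in s, h x ∂μ := by
  have hpre : s =ᵐ[μ] f ⁻¹' s := ae_eq_of_subset_of_measure_ge hmaps
    (hf.measure_preimage hs.nullMeasurableSet).le hs.nullMeasurableSet (measure_ne_top _ _)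
  obtain ⟨t, ht, hts, htf⟩ :=
    hf.quasiMeasurePreserving.exists_preimage_eq_of_preimage_ae hs.nullMeasurableSet hpre.symm
  rw [← setIntegral_congr_set hts, ← setIntegral_congr_set hts]
  exact setIntegral_condExp (MeasurableSpace.invariants_le f) hh ⟨ht, htf⟩

end Birkhoff

/-! ### Kac's inequality -/

section Kac

variable {f : ℂ ≃ₜ ℂ} {U : Set ℂ}

theorem lt_retTime_iff {n : ℕ} {z : ℂ} :
    n < retTime f U z ↔ (∃ m, 0 < m ∧ f^[m] z ∈ U) ∧ ∀ i, 0 < i → i ≤ n → f^[i] z ∉ U := by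
  constructor
  · intro hlt
    have hpos := Nat.zero_lt_of_lt hlt
    exact ⟨⟨_, hpos, retTime_spec hpos⟩,
      fun i hi hin => iterate_notMem_of_lt_retTime hi (hin.trans_lt hlt)⟩
  · rintro ⟨⟨m, hm, hmU⟩, hnot⟩
    have hpos := retTime_pos hm hmU
    exact lt_of_not_ge fun hle => hnot _ hpos hle (retTime_spec hpos)

theorem measurable_retTime (hU : MeasurableSet U) : Measurable (retTime f U) := by
  have hiter (n : ℕ) : MeasurableSet (f^[n] ⁻¹' U) := (f.measurable.iterate n) hU
  refine measurable_of_Ioi fun n => ?_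
  have hset : retTime f U ⁻¹' Ioi n =
      (⋃ m, ⋃ _ : 0 < m, f^[m] ⁻¹' U) ∩ ⋂ i, ⋂ _ : 0 < i, ⋂ _ : i ≤ n, (f^[i] ⁻¹' U)ᶜ := by
    ext z
    simp [lt_retTime_iff]
  rw [hset]
  exact (MeasurableSet.iUnion fun m => .iUnion fun _ => hiter m).inter
    (.iInter fun i => .iInter fun _ => .iInter fun _ => (hiter i).compl)

theorem measurableEmbedding_iterate (f : ℂ ≃ₜ ℂ) (n : ℕ) : MeasurableEmbedding f^[n] :=
  (f.continuous.iterate n).measurableEmbedding (f.injective.iterate n)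

theorem disjoint_iterate_image_lt_retTime {n m : ℕ} (hnm : n < m) :
    Disjoint (f^[n] '' (U ∩ {z | n < retTime f U z})) (f^[m] '' (U ∩ {z | m < retTime f U z})) := by
  rw [Set.disjoint_left]
  rintro _ ⟨x, ⟨hxU, -⟩, rfl⟩ ⟨y, ⟨-, hy⟩, heq⟩
  obtain ⟨d, rfl⟩ := Nat.exists_eq_add_of_le hnm.le
  rw [Function.iterate_add_apply] at heq
  have hyx : f^[d] y = x := f.injective.iterate n heq
  have hle : retTime f U y ≤ d := retTime_le (by lia) (by rwa [hyx])
  have hlt : n + d < retTime f U y := hy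
  lia

theorem lintegral_natCast_eq_tsum {α : Type*} [MeasurableSpace α] {μ : Measure α} {τ : α → ℕ}
    (hτ : Measurable τ) : ∫⁻ x, (τ x : ENNReal) ∂μ = ∑' n : ℕ, μ {x | n < τ x} := by
  have hmeas (n : ℕ) : MeasurableSet {x | n < τ x} := measurableSet_lt measurable_const hτ
  have hsum (x : α) : (τ x : ENNReal) = ∑' n : ℕ, {x | n < τ x}.indicator 1 x := by
    rw [tsum_eq_sum (s := Finset.range (τ x)) fun n hn => by simpa [indicator] using hn,
      Finset.sum_congr rfl fun n hn => indicator_of_mem (by simpa using hn) _]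
    simp
  simp_rw [hsum]
  rw [lintegral_tsum fun n => (measurable_one.indicator (hmeas n)).aemeasurable]
  simp_rw [lintegral_indicator_one (hmeas _)]

/- The sets `f^[n] '' (U ∩ {n < τ})`, which fill the towers over `U`, are pairwise disjoint. -/
theorem lintegral_retTime_le {ν : Measure ℂ} (hf : MeasurePreserving f ν ν) (hU : MeasurableSet U) :
    ∫⁻ z in U, (retTime f U z : ENNReal) ∂ν ≤ ν univ := by
  have hτ := measurable_retTime (f := f) hU
  have hlt (n : ℕ) : MeasurableSet {z | n < retTime f U z} := measurableSet_lt measurable_const hτ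
  set S : ℕ → Set ℂ := fun n => U ∩ {z | n < retTime f U z}
  have hemb := measurableEmbedding_iterate f
  have hdisj : Pairwise (Function.onFun Disjoint fun n => f^[n] '' S n) :=
    (pairwise_disjoint_on _).2 fun _ _ => disjoint_iterate_image_lt_retTime
  calc ∫⁻ z in U, (retTime f U z : ENNReal) ∂ν
      = ∑' n, ν (f^[n] '' S n) := by
        rw [lintegral_natCast_eq_tsum hτ]
        refine tsum_congr fun n => ?_
        rw [Measure.restrict_apply (hlt n), inter_comm,
          ← (hf.iterate n).measure_preimage_emb (hemb n) (f^[n] '' S n),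
          preimage_image_eq _ (hemb n).injective]
    _ = ν (⋃ n, f^[n] '' S n) := (measure_iUnion hdisj fun n =>
        (hemb n).measurableSet_image.2 (hU.inter (hlt n))).symm
    _ ≤ ν univ := measure_mono (subset_univ _)

theorem integrableOn_retTime {ν : Measure ℂ} [IsFiniteMeasure ν] (hf : MeasurePreserving f ν ν)
    (hU : MeasurableSet U) : IntegrableOn (fun z => (retTime f U z : ℝ)) U ν := by
  refine ⟨(measurable_from_nat.comp (measurable_retTime hU)).aestronglyMeasurable, ?_⟩
  rw [hasFiniteIntegral_iff_enorm]
  simp only [Real.enorm_natCast]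
  exact (lintegral_retTime_le hf hU).trans_lt (measure_lt_top ν univ)

theorem birkhoffSum_indicator_retTime {M : Type*} [AddCommMonoid M] (φ : ℂ → M) {z : ℂ} (hz : z ∈ U)
    (hpos : 0 < retTime f U z) : birkhoffSum f (U.indicator φ) (retTime f U z) z = φ z := by
  rw [birkhoffSum, Finset.sum_eq_single_of_mem 0 (Finset.mem_range.2 hpos)]
  · exact indicator_of_mem hz φ
  · intro n hn hne
    exact indicator_of_notMem
      (iterate_notMem_of_lt_retTime (Nat.pos_of_ne_zero hne) (Finset.mem_range.1 hn)) φ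

end Kac

/-! ### The rotation number as a Birkhoff limit -/

theorem FreeDisc.freeRegion {f : ℂ ≃ₜ ℂ} {U : Set ℂ} (hU : FreeDisc f U) : FreeRegion f U := by
  obtain ⟨hopen, ⟨e⟩, hdisj⟩ := hU
  have : ContractibleSpace U := e.contractibleSpace
  exact ⟨hopen, isPreconnected_iff_preconnectedSpace.2 inferInstance,
    fun x hx hfx => hdisj.notMem_of_mem_left (mem_image_of_mem f hx) hfx⟩

theorem FreeDisc.exists_logBranch {f : ℂ ≃ₜ ℂ} {U : Set ℂ} (hU : FreeDisc f U) {c : ℂ}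
    (hc : f c = c) : ∃ L, LogBranch c U L := by
  obtain ⟨e⟩ := hU.2.1
  have : ContractibleSpace U := e.contractibleSpace
  exact _root_.exists_logBranch hU.1 fun hcU => hU.freeRegion.mapsTo_compl hcU (hc.symm ▸ hcU)

section RotationNumber

variable {f g : ℂ ≃ₜ ℂ} {I : HIsotopy f} {J : HIsotopy g} {c : ℂ} {U : Set ℂ} {L : ℂ → ℂ}
  {ν : Measure ℂ}

theorem measurable_indicator_turnCount (hU : IsOpen U) (hL : LogBranch c U L) (n : ℕ) :
    Measurable ((U ∩ f^[n] ⁻¹' U).indicator (turnCount f g L n)) := by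
  have hfn := f.continuous.iterate n
  rw [← piecewise_eq_indicator]
  refine ContinuousOn.measurable_piecewise ?_ continuousOn_const
    (hU.inter (hU.preimage hfn)).measurableSet
  refine (Complex.continuous_im.comp_continuousOn (.sub ?_ ?_)).div_const _
  · exact (g.continuous.iterate n).comp_continuousOn (hL.continuousOn.mono inter_subset_left)
  · exact hL.continuousOn.comp hfn.continuousOn fun x hx => hx.2

theorem measurable_indicator_alphaU (hU : FreeRegion f U) (hJ : IsLogLift J I c) (hc : f c = c)
    (hL : LogBranch c U L) : Measurable (U.indicator (alphaU I U c)) := by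
  have heq : U.indicator (alphaU I U c) = fun z =>
      (U ∩ f^[retTime f U z] ⁻¹' U).indicator (turnCount f g L (retTime f U z)) z := by
    ext z
    by_cases hz : z ∈ U
    · have hret : z ∈ U ∩ f^[retTime f U z] ⁻¹' U := ⟨hz, iterate_retTime_mem hz⟩
      rw [indicator_of_mem hz, indicator_of_mem hret, alphaU_eq_turnCount hU hJ hc hL hz]
    · rw [indicator_of_notMem hz, indicator_of_notMem fun h => hz h.1]
  have hjoint : Measurable fun p : ℕ × ℂ =>
      (U ∩ f^[p.1] ⁻¹' U).indicator (turnCount f g L p.1) p.2 :=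
    measurable_from_prod_countable_right (measurable_indicator_turnCount hU.isOpen hL)
  rw [heq]
  exact hjoint.comp ((measurable_retTime hU.isOpen.measurableSet).prodMk measurable_id)

theorem integrable_indicator_alphaU [IsFiniteMeasure ν] (hf : MeasurePreserving f ν ν)
    (hU : FreeRegion f U) (hJ : IsLogLift J I c) (hc : f c = c) (hL : LogBranch c U L) {M : ℝ}
    (hM : ∀ z, f z = z → z ≠ c → |Enlace I z c| ≤ M) :
    Integrable (U.indicator (alphaU I U c)) ν := by
  obtain ⟨C, hC⟩ := exists_abs_alphaU_le hU hJ hc hL hM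
  have hUm := hU.isOpen.measurableSet
  have hmeas : AEStronglyMeasurable (U.indicator (alphaU I U c)) ν :=
    (measurable_indicator_alphaU hU hJ hc hL).aestronglyMeasurable
  rw [integrable_indicator_iff hUm]
  exact ((integrableOn_retTime hf hUm).const_mul C).mono'
    ((aestronglyMeasurable_indicator_iff hUm).1 hmeas)
    ((ae_restrict_iff' hUm).2 (.of_forall hC))

theorem birkhoffSum_indicator_alphaU (hU : FreeRegion f U) (hJ : IsLogLift J I c) (hc : f c = c)
    (hL : LogBranch c U L) {n : ℕ} {w : ℂ} (hw : w ∈ U) (hn : f^[n] w ∈ U) :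
    birkhoffSum f (U.indicator (alphaU I U c)) n w = turnCount f g L n w := by
  induction n using Nat.strong_induction_on generalizing w with
  | _ n ih =>
    rcases Nat.eq_zero_or_pos n with rfl | hpos
    · rw [birkhoffSum_zero, turnCount_zero]
    · have hret := iterate_retTime_mem (f := f) hw
      have hτ : 0 < retTime f U w := retTime_pos hpos hn
      obtain ⟨d, rfl⟩ := Nat.exists_eq_add_of_le' (retTime_le hpos hn)
      have hd : f^[d] (f^[retTime f U w] w) ∈ U := by rwa [← Function.iterate_add_apply]
      rw [turnCount_add hJ hc hL hw hret, ← ih d (by lia) hret hd, add_comm d, birkhoffSum_add,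
        birkhoffSum_indicator_retTime _ hw hτ, alphaU_eq_turnCount hU hJ hc hL hw]

theorem tendsto_iterate_of_tendsto_iterate_iterate {k : ℕ} {w : ℂ} {n : ℕ → ℕ}
    (h : Tendsto (fun j => f^[n j] (f^[k] w)) atTop (𝓝 (f^[k] w))) :
    Tendsto (fun j => f^[n j] w) atTop (𝓝 w) := by
  have hinv : Function.LeftInverse f.symm^[k] f^[k] :=
    Function.LeftInverse.iterate f.symm_apply_apply k
  have hlim := ((f.symm.continuous.iterate k).tendsto (f^[k] w)).comp h
  rw [hinv w] at hlim
  refine hlim.congr fun j => ?_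
  rw [Function.comp_apply, (Function.Commute.iterate_iterate_self f (n j) k).eq, hinv]

/- At the return times of `f^[k] w`, the sums of `Enlace` and of `α` differ by a boundary term which
tends to zero. -/
theorem hasRot_of_tendsto_birkhoffAverage (hU : FreeRegion f U) (hJ : IsLogLift J I c)
    (hc : f c = c) (hL : LogBranch c U L) {w : ℂ} (hw : w ∈ U) (k : ℕ) {ρ : ℝ}
    (hρ : Tendsto (fun n => birkhoffAverage ℝ f (U.indicator (alphaU I U c)) n w) atTop (𝓝 ρ)) :
    HasRot I c (f^[k] w) ρ := by
  intro n hn hlim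
  have hw_lim := tendsto_iterate_of_tendsto_iterate_iterate hlim
  have hU_nhds : U ∈ 𝓝 w := hU.isOpen.mem_nhds hw
  have hcont : ContinuousAt (fun x => (g^[k] (L x) - g^[k] (L w)).im / (2 * Real.pi)) w := by
    have hLw : ContinuousAt L w := hL.continuousOn.continuousAt hU_nhds
    have hgL : ContinuousAt (fun x => g^[k] (L x)) w :=
      (g.continuous.iterate k).continuousAt.comp hLw
    exact (Complex.continuous_im.continuousAt.comp (hgL.sub continuousAt_const)).div_const _
  have hbdry := hcont.tendsto.comp hw_lim
  have hn_lim : Tendsto (fun j => (n j : ℝ)) atTop atTop :=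
    tendsto_natCast_atTop_atTop.comp hn.tendsto_atTop
  have hsum := (hρ.comp hn.tendsto_atTop).add (hbdry.div_atTop hn_lim)
  rw [add_zero] at hsum
  refine hsum.congr' ?_
  filter_upwards [hw_lim hU_nhds] with j hj
  rw [sum_enlace_iterate_eq hJ hc hL hw hj, ← birkhoffSum_indicator_alphaU hU hJ hc hL hw hj,
    add_div, Function.comp_apply, birkhoffAverage, smul_eq_mul, inv_mul_eq_div]
  rfl

theorem rho_eq_of_hasRot {z : ℂ} {ρ : ℝ} (hρ : HasRot I c z ρ) (hz : z ∈ RecPlus f) :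
    rho I c z = ρ := by
  have hex : ∃ ρ, HasRot I c z ρ := ⟨ρ, hρ⟩
  obtain ⟨n, hn, hlim⟩ := hz
  rw [rho, dif_pos hex]
  exact tendsto_nhds_unique (hex.choose_spec n hn hlim) (hρ n hn hlim)

theorem ae_mem_recPlus [IsFiniteMeasure ν] (hf : MeasurePreserving f ν ν) :
    ∀ᵐ z ∂ν, z ∈ RecPlus f := by
  filter_upwards [hf.conservative.ae_frequently_mem_of_mem_nhds] with z hz
  have hcluster : MapClusterPt z atTop fun n => f^[n] z := mapClusterPt_iff_frequently.2 hz
  exact hcluster.tendsto_subseq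

theorem ae_hasRot_condExp [IsFiniteMeasure ν] (hf : MeasurePreserving f ν ν)
    (hU : FreeRegion f U) (hJ : IsLogLift J I c) (hc : f c = c) (hL : LogBranch c U L)
    (hint : Integrable (U.indicator (alphaU I U c)) ν) :
    ∀ᵐ z ∂ν.restrict (⋃ k, f^[k] '' U),
      HasRot I c z (ν[U.indicator (alphaU I U c) | MeasurableSpace.invariants f] z) := by
  set G := ν[U.indicator (alphaU I U c) | MeasurableSpace.invariants f]
  have hGf : G ∘ f = G :=
    MeasurableSpace.comp_eq_of_measurable_invariants stronglyMeasurable_condExp.measurable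
  have hGiter (k : ℕ) (w : ℂ) : G (f^[k] w) = G w :=
    congrFun (Function.iterate_invariant hGf k) w
  rw [ae_restrict_iUnion_iff]
  intro k
  have hemb := measurableEmbedding_iterate f k
  rw [← ((hf.iterate k).restrict_image_emb hemb U).map_eq, hemb.ae_map_iff,
    ae_restrict_iff' hU.isOpen.measurableSet]
  filter_upwards [tendsto_birkhoffAverage_condExp hf hint] with w hlim hw
  rw [hGiter]
  exact hasRot_of_tendsto_birkhoffAverage hU hJ hc hL hw k hlim

end RotationNumber

theorem mapsTo_iUnion_iterate_image {α : Type*} (f : α → α) (s : Set α) :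
    MapsTo f (⋃ k, f^[k] '' s) (⋃ k, f^[k] '' s) := by
  rintro _ hx
  obtain ⟨k, x, hxs, rfl⟩ := mem_iUnion.1 hx
  exact mem_iUnion.2 ⟨k + 1, x, hxs, Function.iterate_succ_apply' f k x⟩

theorem stmt15_integral_rho_eq_integral_alpha_general
    (f : ℂ ≃ₜ ℂ) (I : HIsotopy f) (ν : Measure ℂ) [IsFiniteMeasure ν]
    (hinv : Measure.map (⇑f) ν = ν) (U : Set ℂ) (hU : FreeDisc f U)
    (z' : ℂ) (hz' : z' ∈ FixPts ⇑f)
    (hbdd : ∃ M : ℝ, ∀ z ∈ FixPts ⇑f, z ≠ z' → |Enlace I z z'| ≤ M) :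
    (∀ᵐ zz ∂(ν.restrict (⋃ k : ℕ, (⇑f)^[k] '' U)), ∃ ρ : ℝ, HasRot I z' zz ρ) ∧
      ∫ zz in ⋃ k : ℕ, (⇑f)^[k] '' U, rho I z' zz ∂ν
        = ∫ zz in U, alphaU I U z' zz ∂ν := by
  obtain ⟨M, hM⟩ := hbdd
  obtain ⟨g, J, hJ⟩ := exists_isLogLift I z'
  obtain ⟨L, hL⟩ := hU.exists_logBranch hz'
  have hf : MeasurePreserving f ν ν := ⟨f.measurable, hinv⟩
  have hint := integrable_indicator_alphaU hf hU.freeRegion hJ hz' hL hM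
  have hrot := ae_hasRot_condExp hf hU.freeRegion hJ hz' hL hint
  refine ⟨hrot.mono fun z hz => ⟨_, hz⟩, ?_⟩
  have hmeas : MeasurableSet (⋃ k, f^[k] '' U) :=
    (isOpen_iUnion fun k => isOpenMap_iterate f k U hU.1).measurableSet
  have hsub : U ⊆ ⋃ k, f^[k] '' U := fun z hz => mem_iUnion.2 ⟨0, z, hz, rfl⟩
  calc ∫ z in ⋃ k, f^[k] '' U, rho I z' z ∂ν
      = ∫ z in ⋃ k, f^[k] '' U,
          ν[U.indicator (alphaU I U z') | MeasurableSpace.invariants f] z ∂ν :=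
        integral_congr_ae <| by
          filter_upwards [hrot, ae_restrict_of_ae (ae_mem_recPlus hf)] with z
            using rho_eq_of_hasRot
    _ = ∫ z in ⋃ k, f^[k] '' U, U.indicator (alphaU I U z') z ∂ν :=
        setIntegral_condExp_invariants hf hint hmeas (mapsTo_iUnion_iterate_image f U)
    _ = ∫ z in U, alphaU I U z' z ∂ν := by
        rw [setIntegral_indicator hU.1.measurableSet, inter_eq_self_of_subset_right hsub]

theorem stmt15_integral_rho_eq_integral_alpha
    (f : ℂ ≃ₜ ℂ) (I : HIsotopy f) (hP1 : P1 I) (hP2 : P2 I)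
    (hnc : ¬ IsCompact (FixPts ⇑f)) (hA : Adapted I)
    (ν : Measure ℂ) [IsFiniteMeasure ν] (hinv : Measure.map (⇑f) ν = ν)
    (U : Set ℂ) (hU : FreeDisc f U)
    (z' : ℂ) (hz' : z' ∈ FixPts ⇑f) :
    (∀ᵐ zz ∂(ν.restrict (⋃ k : ℕ, (⇑f)^[k] '' U)), ∃ ρ : ℝ, HasRot I z' zz ρ) ∧
      ∫ zz in ⋃ k : ℕ, (⇑f)^[k] '' U, rho I z' zz ∂ν
        = ∫ zz in U, alphaU I U z' zz ∂ν := by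
  exact stmt15_integral_rho_eq_integral_alpha_general f I ν hinv U hU z' hz'
    (hP1.imp fun M hM z hz hne => hM z hz z' hz' hne)

end
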